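/- There exist constants δ₀ ∈ (0,1) and C > 0, independent of k, λ and δ, such that for every λ ∈ ℝ, every 0 < δ ≤ δ₀, every k = (k₁,k₃) ∈ ℤ² with |k| ≥ 1, every f ∈ H¹(I) with f(−1) = f(1) = 0, and every solution (Φ,W) of the Rayleigh problem (1−y²−λ+iδ)W + 2Φ = f, (∂_y² − |k|²)Φ = W, Φ(±1) = 0, one has ‖(∂_y,|k|)Φ‖_{L²} + δ^{1/2}‖W‖_{L²} + δ^{3/2}(|1−λ|+δ)^{−1/2}‖W'‖_{L²} ≤ C ‖(∂_y,|k|)f‖_{L²}. -/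

import Mathlib

open Real MeasureTheory

noncomputable section

/-- `|k| = sqrt (k₁² + k₃²)` for `k = (k₁,k₃) ∈ ℤ²`. -/
def kabs (k₁ k₃ : ℤ) : ℝ := Real.sqrt ((k₁ : ℝ) ^ 2 + (k₃ : ℝ) ^ 2)

/-- The `L²` norm on the interval `(-1,1)`. -/
def l2 (f : ℝ → ℂ) : ℝ := Real.sqrt (∫ y in (-1:ℝ)..1, ‖f y‖ ^ 2)

/-- `‖(∂_y,|k|)f‖_{L²} = (‖f'‖² + |k|²‖f‖²)^{1/2}`. -/
def hk (k₁ k₃ : ℤ) (f : ℝ → ℂ) : ℝ :=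
  Real.sqrt ((∫ y in (-1:ℝ)..1, ‖deriv f y‖ ^ 2) +
    (kabs k₁ k₃) ^ 2 * ∫ y in (-1:ℝ)..1, ‖f y‖ ^ 2)

theorem rr_cs {a b : ℝ} (hab : a ≤ b) {p r : ℝ → ℝ} (hp : ContinuousOn p (Set.Icc a b))
    (hr : ContinuousOn r (Set.Icc a b)) :
    (∫ x in a..b, p x * r x) ^ 2 ≤ (∫ x in a..b, p x ^ 2) * ∫ x in a..b, r x ^ 2 := by
  have h : ∀ t : ℝ, 0 ≤ (∫ x in a..b, p x ^ 2) * (t * t) + (2 * ∫ x in a..b, p x * r x) * t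
      + ∫ x in a..b, r x ^ 2 := by
    intro t
    have h1 : 0 ≤ ∫ x in a..b, (t * p x + r x) ^ 2 :=
      intervalIntegral.integral_nonneg hab (fun x _ => sq_nonneg _)
    have i1 : IntervalIntegrable (fun x => t ^ 2 * p x ^ 2) volume a b :=
      ContinuousOn.intervalIntegrable_of_Icc hab (by fun_prop)
    have i2 : IntervalIntegrable (fun x => 2 * t * (p x * r x)) volume a b :=
      ContinuousOn.intervalIntegrable_of_Icc hab (by fun_prop)
    have i3 : IntervalIntegrable (fun x => r x ^ 2) volume a b :=
      ContinuousOn.intervalIntegrable_of_Icc hab (by fun_prop)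
    have h2 : ∫ x in a..b, (t * p x + r x) ^ 2
        = ∫ x in a..b, ((t ^ 2 * p x ^ 2 + 2 * t * (p x * r x)) + r x ^ 2) := by
      congr 1; ext x; ring
    rw [h2, intervalIntegral.integral_add (i1.add i2) i3, intervalIntegral.integral_add i1 i2,
      intervalIntegral.integral_const_mul, intervalIntegral.integral_const_mul] at h1
    nlinarith [h1]
  have := discrim_le_zero h
  unfold discrim at this
  nlinarith [this]

theorem rr_holder {g : ℝ → ℂ} (hg : ContDiff ℝ 1 g) {x y : ℝ} (h : x ≤ y) :
    ‖g y - g x‖ ^ 2 ≤ (y - x) * ∫ t in x..y, ‖deriv g t‖ ^ 2 := by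
  have hc : Continuous (deriv g) := hg.continuous_deriv le_rfl
  have h1 : ∫ t in x..y, deriv g t = g y - g x :=
    intervalIntegral.integral_deriv_eq_sub (fun t _ => (hg.differentiable (by norm_num)) t)
      (hc.intervalIntegrable _ _)
  have h2 : ‖g y - g x‖ ≤ ∫ t in x..y, 1 * ‖deriv g t‖ := by
    rw [← h1]; simp only [one_mul]
    exact intervalIntegral.norm_integral_le_integral_norm h
  have h3 := rr_cs h (p := fun _ => 1) (r := fun t => ‖deriv g t‖) (by fun_prop) (by fun_prop)
  calc ‖g y - g x‖ ^ 2 ≤ (∫ t in x..y, 1 * ‖deriv g t‖) ^ 2 := by gcongr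
    _ ≤ _ := h3
    _ = _ := by simp

/-- weighted square completion -/
theorem rr_ibp {G : ℝ → ℂ} (hG : ContDiff ℝ 1 G) {b : ℝ} (hb : 0 ≤ b) {w w' : ℝ → ℝ}
    (hw : ∀ y ∈ Set.Icc 0 b, HasDerivAt w (w' y) y) (hw' : ContinuousOn w' (Set.Icc 0 b)) :
    ∫ y in (0:ℝ)..b, ‖deriv G y - (w y : ℂ) * G y‖ ^ 2
      = (∫ y in (0:ℝ)..b, ‖deriv G y‖ ^ 2) + (∫ y in (0:ℝ)..b, (w' y + w y ^ 2) * ‖G y‖ ^ 2)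
        - (w b * ‖G b‖ ^ 2 - w 0 * ‖G 0‖ ^ 2) := by
  have hc : Continuous (deriv G) := hG.continuous_deriv le_rfl
  have hGc : Continuous G := hG.continuous
  have hwc : ContinuousOn w (Set.Icc 0 b) := fun y hy => (hw y hy).continuousAt.continuousWithinAt
  have hd : ∀ y ∈ Set.uIcc 0 b, HasDerivAt (fun y => w y * ‖G y‖ ^ 2)
      (w' y * ‖G y‖ ^ 2 + w y * (2 * inner ℝ (G y) (deriv G y))) y := by
    intro y hy
    rw [Set.uIcc_of_le hb] at hy
    have h1 : HasDerivAt G (deriv G y) y := ((hG.differentiable (by norm_num)) y).hasDerivAt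
    exact (hw y hy).mul h1.norm_sq
  have hci : ContinuousOn (fun y => w' y * ‖G y‖ ^ 2 + w y * (2 * inner ℝ (G y) (deriv G y)))
      (Set.Icc 0 b) := by
    have : Continuous (fun y => (2 * inner ℝ (G y) (deriv G y) : ℝ)) := by fun_prop
    exact (hw'.mul (by fun_prop)).add (hwc.mul this.continuousOn)
  have h1 := intervalIntegral.integral_eq_sub_of_hasDerivAt hd
    (ContinuousOn.intervalIntegrable_of_Icc hb hci)
  rw [← h1]
  rw [← intervalIntegral.integral_add, ← intervalIntegral.integral_sub]
  · congr 1; ext y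
    have : ‖deriv G y - (w y : ℂ) * G y‖ ^ 2 = ‖deriv G y‖ ^ 2
        - 2 * inner ℝ (deriv G y) ((w y : ℂ) * G y) + ‖(w y : ℂ) * G y‖ ^ 2 :=
      norm_sub_sq_real _ _
    rw [this, norm_mul, mul_pow]
    have e : inner ℝ (deriv G y) ((w y : ℂ) * G y) = w y * inner ℝ (G y) (deriv G y) := by
      rw [← Complex.real_smul, inner_smul_right, real_inner_comm]
    rw [e, Complex.norm_real, Real.norm_eq_abs, sq_abs]; ring
  · apply ContinuousOn.intervalIntegrable_of_Icc hb; fun_prop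
  · exact ContinuousOn.intervalIntegrable_of_Icc hb hci
  · apply ContinuousOn.intervalIntegrable_of_Icc hb; fun_prop
  · apply ContinuousOn.intervalIntegrable_of_Icc hb; fun_prop

theorem rr_hardy1 {G : ℝ → ℂ} (hG : ContDiff ℝ 1 G) {b A : ℝ} (hb : 0 ≤ b) (hA : b < A)
    (hGb : G b = 0) :
    ∫ y in (0:ℝ)..b, ‖deriv G y + ((2 * y / (A ^ 2 - y ^ 2) : ℝ) : ℂ) * G y‖ ^ 2
      = (∫ y in (0:ℝ)..b, ‖deriv G y‖ ^ 2) - 2 * ∫ y in (0:ℝ)..b, ‖G y‖ ^ 2 / (A ^ 2 - y ^ 2) := by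
  have hs : ∀ y ∈ Set.Icc 0 b, A ^ 2 - y ^ 2 ≠ 0 := by
    intro y hy; have := hy.1; have := hy.2; nlinarith
  have := rr_ibp hG hb (w := fun y => - (2 * y / (A ^ 2 - y ^ 2)))
    (w' := fun y => - ((2 * (A ^ 2 - y ^ 2) - 2 * y * (-(2 * y))) / (A ^ 2 - y ^ 2) ^ 2)) ?_ ?_
  · simp only [hGb] at this
    rw [← intervalIntegral.integral_const_mul]
    have e : ∫ y in (0:ℝ)..b, 2 * (‖G y‖ ^ 2 / (A ^ 2 - y ^ 2)) = - ∫ y in (0:ℝ)..b,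
      (- ((2 * (A ^ 2 - y ^ 2) - 2 * y * (-(2 * y))) / (A ^ 2 - y ^ 2) ^ 2)
        + (- (2 * y / (A ^ 2 - y ^ 2))) ^ 2) * ‖G y‖ ^ 2 := by
      rw [← intervalIntegral.integral_neg]
      apply intervalIntegral.integral_congr
      intro y hy
      rw [Set.uIcc_of_le hb] at hy
      have := hs y hy
      simp only
      field_simp; ring
    rw [e]
    simp only [Complex.ofReal_neg, neg_mul, sub_neg_eq_add] at this
    rw [this]; simp
  · intro y hy
    have h1 : HasDerivAt (fun y : ℝ => 2 * y) 2 y := by simpa using (hasDerivAt_id y).const_mul 2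
    have h2 : HasDerivAt (fun y : ℝ => A ^ 2 - y ^ 2) (-(2 * y)) y := by
      simpa using (hasDerivAt_pow 2 y).const_sub (A ^ 2)
    exact (h1.div h2 (hs y hy)).neg
  · apply ContinuousOn.neg
    apply ContinuousOn.div (by fun_prop) (by fun_prop)
    intro y hy; exact pow_ne_zero 2 (hs y hy)

theorem rr_hardy2 {G : ℝ → ℂ} (hG : ContDiff ℝ 1 G) {b A : ℝ} (hb : 0 ≤ b) (hA : b < A)
    (hGb : G b = 0) :
    (8 / 3) * (∫ y in (0:ℝ)..b, ‖G y‖ ^ 2 / (A ^ 2 - y ^ 2))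
      ≤ (∫ y in (0:ℝ)..b, ‖deriv G y‖ ^ 2) + ‖G 0‖ ^ 2 / A := by
  have hA0 : 0 < A := by linarith
  have hs : ∀ y ∈ Set.Icc 0 b, (0:ℝ) < (A - y) * (y + A / 2) := by
    intro y hy; have := hy.1; have := hy.2; apply mul_pos <;> linarith
  have hGc := hG.continuous
  have key := rr_ibp hG hb (w := fun y => (A / 2 - 2 * y) / ((A - y) * (y + A / 2)))
    (w' := fun y => ((-2) * ((A - y) * (y + A / 2)) - (A / 2 - 2 * y) * (A / 2 - 2 * y))
      / ((A - y) * (y + A / 2)) ^ 2) ?_ ?_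
  · have h0 : 0 ≤ ∫ y in (0:ℝ)..b, ‖deriv G y
        - (((A / 2 - 2 * y) / ((A - y) * (y + A / 2)) : ℝ) : ℂ) * G y‖ ^ 2 :=
      intervalIntegral.integral_nonneg hb (fun x _ => sq_nonneg _)
    rw [key] at h0
    simp only [hGb] at h0
    have e0 : (A / 2 - 2 * 0) / ((A - 0) * (0 + A / 2)) * ‖G 0‖ ^ 2 = ‖G 0‖ ^ 2 / A := by
      rw [sub_zero, zero_add, mul_zero, sub_zero]; field_simp
    rw [e0] at h0
    have e : (∫ y in (0:ℝ)..b,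
      (((-2) * ((A - y) * (y + A / 2)) - (A / 2 - 2 * y) * (A / 2 - 2 * y))
      / ((A - y) * (y + A / 2)) ^ 2 + ((A / 2 - 2 * y) / ((A - y) * (y + A / 2))) ^ 2) * ‖G y‖ ^ 2)
      ≤ ∫ y in (0:ℝ)..b, -((8 / 3) * (‖G y‖ ^ 2 / (A ^ 2 - y ^ 2))) := by
      apply intervalIntegral.integral_mono_on hb
      · apply ContinuousOn.intervalIntegrable_of_Icc hb
        have : ∀ y ∈ Set.Icc 0 b, ((A - y) * (y + A / 2)) ^ 2 ≠ 0 := fun y hy =>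
          pow_ne_zero 2 (hs y hy).ne'
        have h2 : ∀ y ∈ Set.Icc 0 b, ((A - y) * (y + A / 2)) ≠ 0 := fun y hy => (hs y hy).ne'
        apply ContinuousOn.mul _ (by fun_prop)
        apply ContinuousOn.add
        · exact ContinuousOn.div (by fun_prop) (by fun_prop) this
        · exact (ContinuousOn.div (by fun_prop) (by fun_prop) h2).pow 2
      · apply ContinuousOn.intervalIntegrable_of_Icc hb
        apply ContinuousOn.neg
        apply ContinuousOn.mul (by fun_prop)
        apply ContinuousOn.div (by fun_prop) (by fun_prop)
        intro y hy; have := hy.1; have := hy.2; nlinarith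
      · intro y hy
        have h1 := hs y hy
        have hy1 := hy.1; have hy2 := hy.2
        have h3 : 0 < A - y := by linarith
        have h4 : 0 < y + A / 2 := by linarith
        have h5 : 0 < A + y := by linarith
        have : (((-2) * ((A - y) * (y + A / 2)) - (A / 2 - 2 * y) * (A / 2 - 2 * y))
          / ((A - y) * (y + A / 2)) ^ 2 + ((A / 2 - 2 * y) / ((A - y) * (y + A / 2))) ^ 2)
          = - (2 / ((A - y) * (y + A / 2))) := by
          field_simp; ring
        rw [this]
        have h6 : (8 / 3) * (1 / (A ^ 2 - y ^ 2)) ≤ 2 / ((A - y) * (y + A / 2)) := by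
          have : A ^ 2 - y ^ 2 = (A - y) * (A + y) := by ring
          rw [this, mul_one_div, div_le_div_iff₀ (by positivity) (by positivity)]
          nlinarith [mul_pos h3 h4]
        have h7 := mul_le_mul_of_nonneg_right h6 (sq_nonneg ‖G y‖)
        have h8 : ‖G y‖ ^ 2 / (A ^ 2 - y ^ 2) = 1 / (A ^ 2 - y ^ 2) * ‖G y‖ ^ 2 := by ring
        rw [h8]; linarith
    rw [intervalIntegral.integral_neg, intervalIntegral.integral_const_mul] at e
    rw [norm_zero] at h0
    linarith
  · intro y hy
    have h1 : HasDerivAt (fun y : ℝ => A / 2 - 2 * y) (-2) y := by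
      simpa using ((hasDerivAt_id y).const_mul 2).const_sub (A / 2)
    have h2 : HasDerivAt (fun y : ℝ => (A - y) * (y + A / 2)) (A / 2 - 2 * y) y := by
      have := ((hasDerivAt_id y).const_sub A).mul ((hasDerivAt_id y).add_const (A / 2))
      have e : -1 * (id y + A / 2) + (A - id y) * 1 = A / 2 - 2 * y := by simp only [id]; ring
      rw [e] at this
      exact this
    exact h1.div h2 (hs y hy).ne'
  · apply ContinuousOn.div (by fun_prop) (by fun_prop)
    intro y hy; exact pow_ne_zero 2 (hs y hy).ne'

noncomputable def rq (a δ y : ℝ) : ℝ := (a ^ 2 - y ^ 2) / ((a ^ 2 - y ^ 2) ^ 2 + δ ^ 2)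
noncomputable def rd (a δ y : ℝ) : ℝ := δ / ((a ^ 2 - y ^ 2) ^ 2 + δ ^ 2)

theorem rq_cont {a δ : ℝ} (hδ : 0 < δ) : Continuous (rq a δ) := by
  unfold rq
  apply Continuous.div (by fun_prop) (by fun_prop)
  intro y; positivity

theorem rd_cont {a δ : ℝ} (hδ : 0 < δ) : Continuous (rd a δ) := by
  unfold rd
  apply Continuous.div (by fun_prop) (by fun_prop)
  intro y; positivity

theorem rd_nonneg {a δ : ℝ} (hδ : 0 < δ) (y : ℝ) : 0 ≤ rd a δ y := by
  unfold rd; positivity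

theorem rq_nonneg {a δ y : ℝ} (hy : 0 ≤ y) (hya : y ≤ a) : 0 ≤ rq a δ y := by
  unfold rq
  apply div_nonneg _ (by positivity)
  nlinarith

theorem rq_nonpos {a δ y : ℝ} (ha : 0 ≤ a) (hya : a ≤ y) : rq a δ y ≤ 0 := by
  unfold rq
  apply div_nonpos_of_nonpos_of_nonneg _ (by positivity)
  nlinarith

theorem rq_le {a δ y : ℝ} (hδ : 0 < δ) (hy : 0 ≤ y) (hya : y ≤ a) :
    rq a δ y ≤ 1 / (a ^ 2 + δ - y ^ 2) + rd a δ y := by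
  unfold rq rd
  have hs : 0 ≤ a ^ 2 - y ^ 2 := by nlinarith
  have e : a ^ 2 + δ - y ^ 2 = (a ^ 2 - y ^ 2) + δ := by ring
  rw [e]
  set s := a ^ 2 - y ^ 2
  rw [div_add_div _ _ (by positivity) (by positivity), div_le_div_iff₀ (by positivity) (by positivity)]
  have h : 0 ≤ (s ^ 2 + δ ^ 2) := by positivity
  nlinarith [mul_nonneg h (sq_nonneg δ), mul_nonneg h hs]

theorem rq_abs {a δ y : ℝ} (ha : 0 < a) (hδ : 0 < δ) (hy : 0 ≤ y) :
    |rq a δ y| * (a * |y - a|) ≤ 1 := by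
  unfold rq
  rw [abs_div, abs_of_pos (show (0:ℝ) < (a ^ 2 - y ^ 2) ^ 2 + δ ^ 2 by positivity),
    div_mul_eq_mul_div, div_le_one (by positivity)]
  have e : |a ^ 2 - y ^ 2| = |y - a| * (a + y) := by
    rw [show a ^ 2 - y ^ 2 = -((y - a) * (a + y)) by ring, abs_neg, abs_mul,
      abs_of_pos (show 0 < a + y by linarith)]
  have h1 : a * |y - a| ≤ |a ^ 2 - y ^ 2| := by
    rw [e]; nlinarith [abs_nonneg (y - a), mul_nonneg (abs_nonneg (y - a)) hy]
  calc |a ^ 2 - y ^ 2| * (a * |y - a|) ≤ |a ^ 2 - y ^ 2| * |a ^ 2 - y ^ 2| := by gcongr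
    _ = (a ^ 2 - y ^ 2) ^ 2 := by rw [abs_mul_abs_self]; ring
    _ ≤ _ := by nlinarith [sq_nonneg δ]

theorem rq_sqrt {a δ y : ℝ} (ha : 0 < a) (hδ : 0 < δ) (hy : 0 ≤ y) :
    |rq a δ y| * √|y - a| ≤ (1 / a) * |y - a| ^ (-(1:ℝ) / 2) := by
  have h := rq_abs (δ := δ) ha hδ hy
  rcases eq_or_lt_of_le (abs_nonneg (y - a)) with h0 | h0
  · rw [← h0]; simp
  · have e : |y - a| ^ (-(1:ℝ) / 2) = 1 / √|y - a| := by
      rw [neg_div, Real.rpow_neg h0.le, ← Real.sqrt_eq_rpow]; simp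
    rw [e, div_mul_div_comm, le_div_iff₀ (by positivity)]
    have : √|y - a| * √|y - a| = |y - a| := Real.mul_self_sqrt h0.le
    calc _ = |rq a δ y| * (a * (√|y - a| * √|y - a|)) := by ring
      _ ≤ _ := by rw [this]; linarith

theorem rr_rpow_int (a : ℝ) : ∫ z in (0:ℝ)..a, z ^ (-(1:ℝ) / 2) = 2 * a ^ ((1:ℝ)/2) := by
  rw [integral_rpow (by left; norm_num)]
  norm_num
  ring

theorem rr_int_left {a : ℝ} (ha : 0 < a) :
    IntervalIntegrable (fun y => |y - a| ^ (-(1:ℝ) / 2)) volume 0 a ∧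
    ∫ y in (0:ℝ)..a, |y - a| ^ (-(1:ℝ) / 2) = 2 * √a := by
  have h0 : IntervalIntegrable (fun z : ℝ => z ^ (-(1:ℝ) / 2)) volume 0 a :=
    intervalIntegral.intervalIntegrable_rpow' (by norm_num)
  have h1 := (h0.comp_sub_left a).symm
  simp only [sub_zero, sub_self] at h1
  have e : Set.EqOn (fun y => |y - a| ^ (-(1:ℝ) / 2)) (fun y => (a - y) ^ (-(1:ℝ) / 2))
      (Set.uIcc 0 a) := by
    intro y hy
    rw [Set.uIcc_of_le ha.le] at hy
    simp only
    rw [abs_sub_comm, abs_of_nonneg (by linarith [hy.2])]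
  constructor
  · exact h1.congr (fun y hy => (e (Set.uIoc_subset_uIcc hy)).symm)
  · rw [intervalIntegral.integral_congr e,
      intervalIntegral.integral_comp_sub_left (fun z => z ^ (-(1:ℝ) / 2)) a]
    simp only [sub_zero, sub_self]
    rw [rr_rpow_int, Real.sqrt_eq_rpow]

theorem rr_int_right {a : ℝ} (ha : 0 < a) :
    IntervalIntegrable (fun y => |y - a| ^ (-(1:ℝ) / 2)) volume a (2 * a) ∧
    ∫ y in a..(2 * a), |y - a| ^ (-(1:ℝ) / 2) = 2 * √a := by
  have h0 : IntervalIntegrable (fun z : ℝ => z ^ (-(1:ℝ) / 2)) volume 0 a :=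
    intervalIntegral.intervalIntegrable_rpow' (by norm_num)
  have h1 := (h0.comp_sub_right a)
  have e0 : a + a = 2 * a := by ring
  simp only [zero_add, e0] at h1
  have e : Set.EqOn (fun y => |y - a| ^ (-(1:ℝ) / 2)) (fun y => (y - a) ^ (-(1:ℝ) / 2))
      (Set.uIcc a (2 * a)) := by
    intro y hy
    rw [Set.uIcc_of_le (by linarith)] at hy
    simp only
    rw [abs_of_nonneg (by linarith [hy.1])]
  constructor
  · exact h1.congr (fun y hy => (e (Set.uIoc_subset_uIcc hy)).symm)
  · rw [intervalIntegral.integral_congr e,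
      intervalIntegral.integral_comp_sub_right (fun z => z ^ (-(1:ℝ) / 2)) a]
    have e1 : 2 * a - a = a := by ring
    simp only [sub_self, e1]
    rw [rr_rpow_int, Real.sqrt_eq_rpow]

/-- generic: weight q against a function Hölder at a -/
theorem rq_holder_left {a δ c : ℝ} (ha : 0 < a) (hδ : 0 < δ) {v : ℝ → ℝ}
    (hv : ContinuousOn v (Set.Icc 0 a))
    (hvb : ∀ y ∈ Set.Icc 0 a, |v y| ≤ c * √|y - a|) :
    ∫ y in (0:ℝ)..a, |rq a δ y| * |v y| ≤ 2 * c / √a := by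
  obtain ⟨hi, he⟩ := rr_int_left ha
  have hc : ContinuousOn (fun y => |rq a δ y| * |v y|) (Set.Icc 0 a) := by
    have := (rq_cont (a := a) hδ).continuousOn (s := Set.Icc 0 a)
    exact this.abs.mul hv.abs
  calc ∫ y in (0:ℝ)..a, |rq a δ y| * |v y|
      ≤ ∫ y in (0:ℝ)..a, (c / a) * |y - a| ^ (-(1:ℝ) / 2) := by
        apply intervalIntegral.integral_mono_on ha.le
          (ContinuousOn.intervalIntegrable_of_Icc ha.le hc) (hi.const_mul _)
        intro y hy
        have hc0 : 0 ≤ c := by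
          have := (abs_nonneg _).trans (hvb 0 ⟨le_rfl, ha.le⟩)
          have h2 : 0 < √|0 - a| := by rw [zero_sub, abs_neg, abs_of_pos ha]; positivity
          exact nonneg_of_mul_nonneg_left this h2
        calc |rq a δ y| * |v y| ≤ |rq a δ y| * (c * √|y - a|) := by
              gcongr; exact hvb y hy
          _ = c * (|rq a δ y| * √|y - a|) := by ring
          _ ≤ c * ((1 / a) * |y - a| ^ (-(1:ℝ) / 2)) := by
              exact mul_le_mul_of_nonneg_left (rq_sqrt ha hδ hy.1) hc0
          _ = _ := by ring
    _ = 2 * c / √a := by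
        rw [intervalIntegral.integral_const_mul, he]
        have : √a * √a = a := Real.mul_self_sqrt ha.le
        field_simp
        rw [sq, this]

theorem rq_holder_right {a δ c : ℝ} (ha : 0 < a) (hδ : 0 < δ) {v : ℝ → ℝ}
    (hv : ContinuousOn v (Set.Icc a (2 * a)))
    (hvb : ∀ y ∈ Set.Icc a (2 * a), |v y| ≤ c * √|y - a|) :
    ∫ y in a..(2 * a), |rq a δ y| * |v y| ≤ 2 * c / √a := by
  obtain ⟨hi, he⟩ := rr_int_right ha
  have h2a : a ≤ 2 * a := by linarith
  have hc : ContinuousOn (fun y => |rq a δ y| * |v y|) (Set.Icc a (2 * a)) := by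
    have := (rq_cont (a := a) hδ).continuousOn (s := Set.Icc a (2 * a))
    exact this.abs.mul hv.abs
  calc ∫ y in a..(2 * a), |rq a δ y| * |v y|
      ≤ ∫ y in a..(2 * a), (c / a) * |y - a| ^ (-(1:ℝ) / 2) := by
        apply intervalIntegral.integral_mono_on h2a
          (ContinuousOn.intervalIntegrable_of_Icc h2a hc) (hi.const_mul _)
        intro y hy
        have hc0 : 0 ≤ c := by
          have := (abs_nonneg _).trans (hvb (2 * a) ⟨h2a, le_rfl⟩)
          have h2 : 0 < √|2 * a - a| := by
            rw [show 2 * a - a = a by ring, abs_of_pos ha]; positivity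
          exact nonneg_of_mul_nonneg_left this h2
        calc |rq a δ y| * |v y| ≤ |rq a δ y| * (c * √|y - a|) := by
              gcongr; exact hvb y hy
          _ = c * (|rq a δ y| * √|y - a|) := by ring
          _ ≤ c * ((1 / a) * |y - a| ^ (-(1:ℝ) / 2)) := by
              exact mul_le_mul_of_nonneg_left (rq_sqrt ha hδ (ha.le.trans hy.1)) hc0
          _ = _ := by ring
    _ = 2 * c / √a := by
        rw [intervalIntegral.integral_const_mul, he]
        have : √a * √a = a := Real.mul_self_sqrt ha.le
        field_simp
        rw [sq, this]

theorem rq_pair {a δ z : ℝ} (ha : 0 < a) (hδ : 0 < δ) (hz : 0 ≤ z) (hza : z ≤ a) :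
    |rq a δ (a - z) + rq a δ (a + z)| ≤ 1 / a ^ 2 := by
  rcases eq_or_lt_of_le hz with h0 | h0
  · subst h0; simp [rq]; positivity
  unfold rq
  have e1 : a ^ 2 - (a - z) ^ 2 = z * (2 * a - z) := by ring
  have e2 : a ^ 2 - (a + z) ^ 2 = -(z * (2 * a + z)) := by ring
  rw [e1, e2]
  have p1 : 0 < 2 * a - z := by linarith
  have p2 : 0 < 2 * a + z := by linarith
  set s1 := z * (2 * a - z) with hs1
  set s2 := z * (2 * a + z) with hs2
  have q1 : 0 < s1 := by positivity
  have q2 : 0 < s2 := by positivity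
  have h12 : s2 - s1 = 2 * z ^ 2 := by rw [hs1, hs2]; ring
  have h13 : s1 * s2 = z ^ 2 * (4 * a ^ 2 - z ^ 2) := by rw [hs1, hs2]; ring
  have e3 : s1 / (s1 ^ 2 + δ ^ 2) + -s2 / ((-s2) ^ 2 + δ ^ 2)
     = (s2 - s1) * (s1 * s2 - δ ^ 2) / ((s1 ^ 2 + δ ^ 2) * (s2 ^ 2 + δ ^ 2)) := by
    rw [neg_sq]
    field_simp; ring
  rw [e3, abs_div, abs_mul, abs_of_pos (show 0 < (s1 ^ 2 + δ ^ 2) * (s2 ^ 2 + δ ^ 2) by positivity),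
    h12, abs_of_pos (show 0 < 2 * z ^ 2 by positivity)]
  have h4 : |s1 * s2 - δ ^ 2| ≤ s1 * s2 + δ ^ 2 := by
    rw [abs_le]; constructor <;> nlinarith [mul_pos q1 q2, sq_nonneg δ]
  have h5 : (s1 * s2 + δ ^ 2) * (s1 * s2) ≤ (s1 ^ 2 + δ ^ 2) * (s2 ^ 2 + δ ^ 2) := by
    nlinarith [sq_nonneg (s1 - s2), sq_nonneg δ, mul_nonneg (sq_nonneg δ) (sq_nonneg (s1 - s2)),
      mul_pos (mul_pos q1 q2) (pow_pos hδ 2), pow_pos hδ 4]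
  rw [div_le_div_iff₀ (by positivity) (by positivity)]
  have h6 : 2 * a ^ 2 * z ^ 2 ≤ s1 * s2 := by
    rw [h13]; nlinarith [sq_nonneg z, mul_nonneg (sq_nonneg z) (show 0 ≤ a ^ 2 - z ^ 2 by nlinarith)]
  calc 2 * z ^ 2 * |s1 * s2 - δ ^ 2| * a ^ 2 ≤ 2 * z ^ 2 * (s1 * s2 + δ ^ 2) * a ^ 2 := by gcongr
    _ = (s1 * s2 + δ ^ 2) * (2 * a ^ 2 * z ^ 2) := by ring
    _ ≤ (s1 * s2 + δ ^ 2) * (s1 * s2) := by gcongr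
    _ ≤ _ := by linarith

theorem rq_pv {a δ : ℝ} (ha : 0 < a) (hδ : 0 < δ) :
    |(∫ y in (0:ℝ)..a, rq a δ y) + ∫ y in a..(2 * a), rq a δ y| ≤ 1 / a := by
  have hc := rq_cont (a := a) hδ
  have e1 : ∫ y in (0:ℝ)..a, rq a δ y = ∫ z in (0:ℝ)..a, rq a δ (a - z) := by
    rw [intervalIntegral.integral_comp_sub_left (fun z => rq a δ z) a]; simp
  have e2 : ∫ y in a..(2 * a), rq a δ y = ∫ z in (0:ℝ)..a, rq a δ (a + z) := by
    rw [intervalIntegral.integral_comp_add_left (fun z => rq a δ z) a]; simp [two_mul]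
  have c1 : Continuous (fun z => rq a δ (a - z)) := hc.comp (by fun_prop)
  have c2 : Continuous (fun z => rq a δ (a + z)) := hc.comp (by fun_prop)
  rw [e1, e2, ← intervalIntegral.integral_add (c1.intervalIntegrable _ _)
    (c2.intervalIntegrable _ _)]
  have := intervalIntegral.norm_integral_le_of_norm_le_const (a := (0:ℝ)) (b := a) (C := 1 / a ^ 2)
    (f := fun z => rq a δ (a - z) + rq a δ (a + z)) (by
      intro z hz
      rw [Set.uIoc_of_le ha.le] at hz
      exact rq_pair ha hδ hz.1.le hz.2)
  rw [Real.norm_eq_abs] at this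
  refine this.trans (le_of_eq ?_)
  rw [sub_zero, abs_of_pos ha]; field_simp

theorem rd_int {a δ : ℝ} (ha : 0 < a) (hδ : 0 < δ) {b : ℝ} (hb : 0 ≤ b) :
    ∫ y in (0:ℝ)..b, rd a δ y ≤ 4 / a := by
  have hd : ∀ y ∈ Set.uIcc 0 b, HasDerivAt (fun y => (1 / a) * Real.arctan (a * (y - a) / δ))
      (δ / (a ^ 2 * (y - a) ^ 2 + δ ^ 2)) y := by
    intro y _
    have h1 : HasDerivAt (fun y => a * (y - a) / δ) (a / δ) y := by
      simpa using (((hasDerivAt_id y).sub_const a).const_mul a).div_const δ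
    have := (h1.arctan).const_mul (1 / a)
    have e : δ / (a ^ 2 * (y - a) ^ 2 + δ ^ 2)
        = 1 / a * (1 / (1 + (a * (y - a) / δ) ^ 2) * (a / δ)) := by
      have : 0 < a ^ 2 * (y - a) ^ 2 + δ ^ 2 := by positivity
      have h3 : 1 + (a * (y - a) / δ) ^ 2 = (a ^ 2 * (y - a) ^ 2 + δ ^ 2) / δ ^ 2 := by
        field_simp; ring
      rw [h3]
      field_simp
    rw [e]; exact this
  have hcont : Continuous (fun y => δ / (a ^ 2 * (y - a) ^ 2 + δ ^ 2)) := by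
    apply Continuous.div (by fun_prop) (by fun_prop)
    intro y; positivity
  have h1 := intervalIntegral.integral_eq_sub_of_hasDerivAt hd (hcont.intervalIntegrable _ _)
  calc ∫ y in (0:ℝ)..b, rd a δ y ≤ ∫ y in (0:ℝ)..b, δ / (a ^ 2 * (y - a) ^ 2 + δ ^ 2) := by
        apply intervalIntegral.integral_mono_on hb ((rd_cont hδ).intervalIntegrable _ _)
          (hcont.intervalIntegrable _ _)
        intro y hy
        unfold rd
        apply div_le_div_of_nonneg_left hδ.le (by positivity)
        have : (a ^ 2 - y ^ 2) ^ 2 = (y - a) ^ 2 * (a + y) ^ 2 := by ring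
        rw [this]
        have : a ^ 2 ≤ (a + y) ^ 2 := by nlinarith [hy.1]
        nlinarith [mul_le_mul_of_nonneg_left this (sq_nonneg (y - a))]
    _ = _ := h1
    _ ≤ 4 / a := by
        have h2 := Real.arctan_lt_pi_div_two (a * (b - a) / δ)
        have h3 := Real.neg_pi_div_two_lt_arctan (a * (0 - a) / δ)
        have h4 := Real.pi_le_four
        rw [← mul_sub, div_mul_eq_mul_div, one_mul]
        gcongr
        linarith

theorem rr_A {g : ℝ → ℂ} (hg : ContDiff ℝ 1 g) {a δ : ℝ} (ha : 0 < a) (hδ : 0 < δ)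
    (hda : δ ≤ a ^ 2) :
    ‖g a‖ ^ 2 ≤ 10 * a * (∫ y in (0:ℝ)..a, rd a δ y * ‖g y‖ ^ 2)
      + 2 * (δ / a) * ∫ y in (0:ℝ)..a, ‖deriv g y‖ ^ 2 := by
  have hgc := hg.continuous
  have hc : Continuous (deriv g) := hg.continuous_deriv le_rfl
  have hdc := rd_cont (a := a) hδ
  set K := ∫ y in (0:ℝ)..a, ‖deriv g y‖ ^ 2 with hK
  set X := ∫ y in (0:ℝ)..a, rd a δ y * ‖g y‖ ^ 2 with hX
  set d := δ / a with hd
  have hd0 : 0 < d := by positivity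
  have hdle : d ≤ a := by rw [hd, div_le_iff₀ ha]; nlinarith
  have had : a * d = δ := by rw [hd]; field_simp
  have hpt : ∀ y ∈ Set.Icc (a - d) a,
      ‖g a‖ ^ 2 ≤ 10 * δ * (rd a δ y * ‖g y‖ ^ 2) + 2 * d * K := by
    intro y hy
    have h1 := rr_holder hg hy.2
    have h2 : ∫ t in y..a, ‖deriv g t‖ ^ 2 ≤ K := by
      apply intervalIntegral.integral_mono_interval (by linarith [hy.1]) hy.2 le_rfl
      · exact Filter.Eventually.of_forall (fun t => sq_nonneg _)
      · exact Continuous.intervalIntegrable (by fun_prop) _ _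
    have hK0 : 0 ≤ ∫ t in y..a, ‖deriv g t‖ ^ 2 :=
      intervalIntegral.integral_nonneg hy.2 (fun t _ => sq_nonneg _)
    have h3 : ‖g a - g y‖ ^ 2 ≤ d * K := by
      refine h1.trans ?_
      gcongr; linarith [hy.1]
    have h4 : ‖g a‖ ≤ ‖g y‖ + ‖g a - g y‖ := by
      calc ‖g a‖ = ‖g y + (g a - g y)‖ := by congr 1; ring
        _ ≤ _ := norm_add_le _ _
    have h5 : 1 ≤ 5 * δ * rd a δ y := by
      unfold rd
      rw [mul_div_assoc', le_div_iff₀ (by positivity)]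
      have hs0 : 0 ≤ a ^ 2 - y ^ 2 := by nlinarith [hy.1, hy.2]
      have hs : a ^ 2 - y ^ 2 ≤ 2 * δ := by
        rw [← had]; nlinarith [hy.1, hy.2]
      nlinarith
    have h6 : ‖g y‖ ^ 2 ≤ 5 * δ * (rd a δ y * ‖g y‖ ^ 2) := by
      nlinarith [mul_le_mul_of_nonneg_right h5 (sq_nonneg ‖g y‖)]
    have h7 : ‖g a‖ ^ 2 ≤ 2 * ‖g y‖ ^ 2 + 2 * ‖g a - g y‖ ^ 2 := by
      nlinarith [sq_nonneg (‖g y‖ - ‖g a - g y‖), norm_nonneg (g a), norm_nonneg (g y)]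
    nlinarith
  have hint : ∫ y in (a - d)..a, ‖g a‖ ^ 2
      ≤ ∫ y in (a - d)..a, (10 * δ * (rd a δ y * ‖g y‖ ^ 2) + 2 * d * K) := by
    apply intervalIntegral.integral_mono_on (by linarith)
    · exact Continuous.intervalIntegrable (by fun_prop) _ _
    · exact Continuous.intervalIntegrable (by fun_prop) _ _
    · exact hpt
  rw [intervalIntegral.integral_const, intervalIntegral.integral_add
    (Continuous.intervalIntegrable (by fun_prop) _ _)
    (Continuous.intervalIntegrable (by fun_prop) _ _), intervalIntegral.integral_const,
    intervalIntegral.integral_const_mul] at hint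
  have hX2 : ∫ y in (a - d)..a, rd a δ y * ‖g y‖ ^ 2 ≤ X := by
    apply intervalIntegral.integral_mono_interval (by linarith) (by linarith) le_rfl
    · exact Filter.Eventually.of_forall (fun t => mul_nonneg (rd_nonneg hδ t) (sq_nonneg _))
    · exact Continuous.intervalIntegrable (by fun_prop) _ _
  simp only [smul_eq_mul, sub_sub_cancel] at hint
  have h8 : d * ‖g a‖ ^ 2 ≤ d * (10 * a * X + 2 * d * K) := by
    have : 10 * δ * (∫ y in (a - d)..a, rd a δ y * ‖g y‖ ^ 2) ≤ 10 * δ * X := by gcongr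
    have e : 10 * δ * X = d * (10 * a * X) := by linear_combination (-10 * X) * had
    linarith
  exact le_of_mul_le_mul_left h8 hd0

theorem rr_C {g : ℝ → ℂ} (hg : ContDiff ℝ 1 g) {a δ b : ℝ} (hb : 0 < b) (hba : b ≤ a)
    (hδ : 0 < δ) :
    (∫ y in (0:ℝ)..b, ‖deriv g y + ((2 * y / (a ^ 2 + δ - y ^ 2) : ℝ) : ℂ) * (g y - g b)‖ ^ 2)
      = (∫ y in (0:ℝ)..b, ‖deriv g y‖ ^ 2)
        - 2 * (∫ y in (0:ℝ)..b, ‖g y - g b‖ ^ 2 / (a ^ 2 + δ - y ^ 2)) ∧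
    (8 / 3) * (∫ y in (0:ℝ)..b, ‖g y - g b‖ ^ 2 / (a ^ 2 + δ - y ^ 2))
      ≤ (∫ y in (0:ℝ)..b, ‖deriv g y‖ ^ 2) + ‖g 0 - g b‖ ^ 2 / a := by
  have ha : 0 < a := by linarith
  have hA2 : √(a ^ 2 + δ) ^ 2 = a ^ 2 + δ := Real.sq_sqrt (by positivity)
  have haA : a < √(a ^ 2 + δ) := Real.lt_sqrt_of_sq_lt (by linarith)
  have hG : ContDiff ℝ 1 (fun y => g y - g b) := hg.sub contDiff_const
  have hdG : deriv (fun y => g y - g b) = deriv g := by ext y; simp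
  have h1 := rr_hardy1 hG hb.le (lt_of_le_of_lt hba haA) (by simp)
  have h2 := rr_hardy2 hG hb.le (lt_of_le_of_lt hba haA) (by simp)
  rw [hA2, hdG] at h1 h2
  refine ⟨h1, h2.trans ?_⟩
  gcongr

theorem rr_B {g : ℝ → ℂ} (hg : ContDiff ℝ 1 g) (hg1 : g 1 = 0) {a δ K : ℝ} (ha : 0 < a)
    (ha1 : a ≤ 1) (hδ : 0 < δ) (hK : ∫ y in (0:ℝ)..1, ‖deriv g y‖ ^ 2 ≤ K) :
    ∫ y in (0:ℝ)..1, rq a δ y * ‖g y‖ ^ 2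
      ≤ (∫ y in (0:ℝ)..a, ‖g y - g a‖ ^ 2 / (a ^ 2 + δ - y ^ 2))
        + 2 * (∫ y in (0:ℝ)..a, rd a δ y * ‖g y‖ ^ 2)
        + 9 * (‖g a‖ ^ 2 / a) + 8 * (‖g a‖ * √K / √a) := by
  have hgc := hg.continuous
  have hc : Continuous (deriv g) := hg.continuous_deriv le_rfl
  have hdc := rd_cont (a := a) hδ
  have hqc := rq_cont (a := a) hδ
  set γ := ‖g a‖ with hγ
  have hγ0 : 0 ≤ γ := norm_nonneg _
  have hhol : ∀ x y : ℝ, 0 ≤ x → x ≤ y → y ≤ 1 → ‖g y - g x‖ ≤ √K * √(y - x) := by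
    intro x y hx hxy hy
    have h1 := rr_holder hg hxy
    have h2 : ∫ t in x..y, ‖deriv g t‖ ^ 2 ≤ K := by
      refine le_trans ?_ hK
      apply intervalIntegral.integral_mono_interval hx hxy hy
      · exact Filter.Eventually.of_forall (fun t => sq_nonneg _)
      · exact Continuous.intervalIntegrable (by fun_prop) _ _
    have hK0 : 0 ≤ ∫ t in x..y, ‖deriv g t‖ ^ 2 :=
      intervalIntegral.integral_nonneg hxy (fun t _ => sq_nonneg _)
    rw [← Real.sqrt_mul (hK0.trans h2)]
    apply Real.le_sqrt_of_sq_le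
    refine h1.trans ?_
    rw [mul_comm]
    exact mul_le_mul_of_nonneg_right h2 (by linarith)
  -- inner
  have hin : ∫ y in (0:ℝ)..a, rq a δ y * ‖g y‖ ^ 2 ≤
      ∫ y in (0:ℝ)..a, (‖g y - g a‖ ^ 2 / (a ^ 2 + δ - y ^ 2) + 2 * (rd a δ y * ‖g y‖ ^ 2)
        + 2 * γ ^ 2 * rd a δ y + 2 * γ * (|rq a δ y| * |‖g y - g a‖|) + γ ^ 2 * rq a δ y) := by
    apply intervalIntegral.integral_mono_on ha.le
    · exact Continuous.intervalIntegrable (by fun_prop) _ _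
    · apply ContinuousOn.intervalIntegrable_of_Icc ha.le
      have : ContinuousOn (fun y => ‖g y - g a‖ ^ 2 / (a ^ 2 + δ - y ^ 2)) (Set.Icc 0 a) := by
        apply ContinuousOn.div (by fun_prop) (by fun_prop)
        intro y hy; have := hy.1; have := hy.2; nlinarith
      fun_prop
    · intro y hy
      have h0 := rq_nonneg (δ := δ) hy.1 hy.2
      have h1 := rq_le hδ hy.1 hy.2
      have h2 : ‖g y‖ ≤ ‖g y - g a‖ + γ := by
        calc ‖g y‖ = ‖(g y - g a) + g a‖ := by congr 1; ring
          _ ≤ _ := norm_add_le _ _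
      have h3 : ‖g y - g a‖ ≤ ‖g y‖ + γ := norm_sub_le _ _
      have h4 := rd_nonneg (a := a) hδ y
      set n := ‖g y - g a‖
      have hn : 0 ≤ n := norm_nonneg _
      rw [abs_of_nonneg h0, abs_of_nonneg hn]
      have h5 : ‖g y‖ ^ 2 ≤ n ^ 2 + 2 * γ * n + γ ^ 2 := by nlinarith [norm_nonneg (g y)]
      have h6 : n ^ 2 ≤ 2 * ‖g y‖ ^ 2 + 2 * γ ^ 2 := by
        nlinarith [norm_nonneg (g y), sq_nonneg (‖g y‖ - γ)]
      have h7 := mul_le_mul_of_nonneg_left h5 h0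
      have h8 := mul_le_mul_of_nonneg_right h1 (sq_nonneg n)
      have h9 := mul_le_mul_of_nonneg_left h6 h4
      have e : n ^ 2 / (a ^ 2 + δ - y ^ 2) = 1 / (a ^ 2 + δ - y ^ 2) * n ^ 2 := by ring
      rw [e]
      nlinarith
  have iq : ∀ u v : ℝ, IntervalIntegrable (rq a δ) volume u v :=
    fun u v => hqc.intervalIntegrable _ _
  have hL := rq_holder_left ha hδ (c := √K) (v := fun y => ‖g y - g a‖) (by fun_prop) (by
    intro y hy
    rw [abs_of_nonneg (norm_nonneg _), norm_sub_rev, abs_sub_comm,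
      abs_of_nonneg (by linarith [hy.2])]
    exact hhol y a hy.1 hy.2 ha1)
  have i1 : IntervalIntegrable (fun y => ‖g y - g a‖ ^ 2 / (a ^ 2 + δ - y ^ 2)) volume 0 a := by
    apply ContinuousOn.intervalIntegrable_of_Icc ha.le
    apply ContinuousOn.div (by fun_prop) (by fun_prop)
    intro y hy; have := hy.1; have := hy.2; nlinarith
  have i2 : IntervalIntegrable (fun y => 2 * (rd a δ y * ‖g y‖ ^ 2)) volume 0 a :=
    Continuous.intervalIntegrable (by fun_prop) _ _
  have i3 : IntervalIntegrable (fun y => 2 * γ ^ 2 * rd a δ y) volume 0 a :=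
    Continuous.intervalIntegrable (by fun_prop) _ _
  have i4 : IntervalIntegrable (fun y => 2 * γ * (|rq a δ y| * |‖g y - g a‖|)) volume 0 a :=
    Continuous.intervalIntegrable (by fun_prop) _ _
  have i5 : IntervalIntegrable (fun y => γ ^ 2 * rq a δ y) volume 0 a :=
    Continuous.intervalIntegrable (by fun_prop) _ _
  rw [intervalIntegral.integral_add (((i1.add i2).add i3).add i4) i5,
    intervalIntegral.integral_add ((i1.add i2).add i3) i4,
    intervalIntegral.integral_add (i1.add i2) i3,
    intervalIntegral.integral_add i1 i2] at hin
  simp only [intervalIntegral.integral_const_mul] at hin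
  -- outer
  set v : ℝ → ℝ := fun y => √K * √|y - a| with hv
  have hvc : Continuous v := by rw [hv]; fun_prop
  have hR := rq_holder_right ha hδ (c := √K) (v := v) hvc.continuousOn (by
    intro y hy
    rw [abs_of_nonneg (by positivity)])
  set m : ℝ → ℝ := fun y => γ ^ 2 * rq a δ y + 2 * γ * (|rq a δ y| * |v y|) with hm
  have hmc : Continuous m := by rw [hm]; fun_prop
  have hpt : ∀ y ∈ Set.Icc a 1, rq a δ y * ‖g y‖ ^ 2 ≤ m y := by
    intro y hy
    have h0 := rq_nonpos (δ := δ) ha.le hy.1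
    have h1 := hhol a y ha.le hy.1 hy.2
    have h2 : γ ≤ ‖g y‖ + ‖g y - g a‖ := by
      calc γ = ‖g y - (g y - g a)‖ := by rw [hγ]; congr 1; ring
        _ ≤ _ := norm_sub_le _ _
    have hvy : v y = √K * √(y - a) := by
      simp only [hv]; rw [abs_of_nonneg (show 0 ≤ y - a by linarith [hy.1])]
    have hv0 : 0 ≤ v y := by rw [hvy]; positivity
    rw [← hvy] at h1
    simp only [hm]
    rw [abs_of_nonpos h0, abs_of_nonneg hv0]
    have h3 : γ ^ 2 - 2 * γ * v y ≤ ‖g y‖ ^ 2 := by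
      by_cases h : γ ≤ v y
      · nlinarith [sq_nonneg ‖g y‖]
      · push Not at h
        have : γ - v y ≤ ‖g y‖ := by linarith
        nlinarith
    nlinarith [mul_le_mul_of_nonpos_left h3 h0]
  have hout : ∫ y in a..1, rq a δ y * ‖g y‖ ^ 2 ≤ ∫ y in a..(2 * a), m y := by
    rcases le_total (2 * a) 1 with h2 | h2
    · rw [← intervalIntegral.integral_add_adjacent_intervals (b := 2 * a)
        (Continuous.intervalIntegrable (by fun_prop) _ _)
        (Continuous.intervalIntegrable (by fun_prop) _ _)]
      have h3 : ∫ y in (2 * a)..1, rq a δ y * ‖g y‖ ^ 2 ≤ 0 := by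
        have h0 : ∫ y in (2 * a)..1, (0:ℝ) = 0 := by simp
        rw [← h0]
        apply intervalIntegral.integral_mono_on h2
          (Continuous.intervalIntegrable (by fun_prop) _ _)
          (Continuous.intervalIntegrable (by fun_prop) _ _)
        intro y hy
        exact mul_nonpos_of_nonpos_of_nonneg (rq_nonpos ha.le (by linarith [hy.1])) (sq_nonneg _)
      have h4 : ∫ y in a..(2 * a), rq a δ y * ‖g y‖ ^ 2 ≤ ∫ y in a..(2 * a), m y := by
        apply intervalIntegral.integral_mono_on (by linarith)
          (Continuous.intervalIntegrable (by fun_prop) _ _) (hmc.intervalIntegrable _ _)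
        intro y hy; exact hpt y ⟨hy.1, hy.2.trans h2⟩
      linarith
    · rw [← intervalIntegral.integral_add_adjacent_intervals (a := a) (b := 1) (c := 2 * a)
        (hmc.intervalIntegrable _ _) (hmc.intervalIntegrable _ _)]
      have h3 : 0 ≤ ∫ y in 1..(2 * a), m y := by
        apply intervalIntegral.integral_nonneg h2
        intro y hy
        have h0 := rq_nonpos (δ := δ) ha.le (show a ≤ y by linarith [hy.1])
        have h1 := hhol a 1 ha.le ha1 le_rfl
        rw [hg1, zero_sub, norm_neg] at h1
        have hvy : γ ≤ v y := by
          refine h1.trans ?_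
          simp only [hv]
          rw [abs_of_nonneg (show 0 ≤ y - a by linarith [hy.1])]
          gcongr; exact hy.1
        simp only [hm]
        rw [abs_of_nonpos h0, abs_of_nonneg (hγ0.trans hvy)]
        nlinarith [mul_nonneg (mul_nonneg hγ0 (neg_nonneg.mpr h0)) (sub_nonneg.mpr hvy),
          mul_nonneg (mul_nonneg hγ0 (neg_nonneg.mpr h0)) hγ0]
      have h4 : ∫ y in a..1, rq a δ y * ‖g y‖ ^ 2 ≤ ∫ y in a..1, m y := by
        apply intervalIntegral.integral_mono_on (by linarith)
          (Continuous.intervalIntegrable (by fun_prop) _ _) (hmc.intervalIntegrable _ _)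
        intro y hy; exact hpt y hy
      linarith
  have em : ∫ y in a..(2 * a), m y = γ ^ 2 * (∫ y in a..(2 * a), rq a δ y)
      + 2 * γ * ∫ y in a..(2 * a), |rq a δ y| * |v y| := by
    simp only [hm]
    rw [intervalIntegral.integral_add (Continuous.intervalIntegrable (by fun_prop) _ _)
      (Continuous.intervalIntegrable (by fun_prop) _ _)]
    simp only [intervalIntegral.integral_const_mul]
  have hpv := le_of_abs_le (rq_pv ha hδ)
  have hrd := rd_int ha hδ ha.le
  rw [← intervalIntegral.integral_add_adjacent_intervals (a := (0:ℝ)) (b := a) (c := 1)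
        (Continuous.intervalIntegrable (by fun_prop) _ _)
        (Continuous.intervalIntegrable (by fun_prop) _ _)]
  have f1 := mul_le_mul_of_nonneg_left hpv (sq_nonneg γ)
  have f2 := mul_le_mul_of_nonneg_left hrd (show 0 ≤ 2 * γ ^ 2 by positivity)
  have f3 := mul_le_mul_of_nonneg_left hL (show 0 ≤ 2 * γ by positivity)
  have f4 := mul_le_mul_of_nonneg_left hR (show 0 ≤ 2 * γ by positivity)
  have g1 : γ ^ 2 * (1 / a) = γ ^ 2 / a := by ring
  have g2 : 2 * γ ^ 2 * (4 / a) = 8 * (γ ^ 2 / a) := by ring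
  have g3 : 2 * γ * (2 * √K / √a) = 4 * (γ * √K / √a) := by ring
  rw [g1] at f1; rw [g2] at f2; rw [g3] at f3 f4
  linarith

theorem rr_D {g : ℝ → ℂ} (hg : ContDiff ℝ 1 g) {a δ D : ℝ} (ha : 0 < a) (hδ : 0 < δ)
    (hda : δ ≤ a ^ 2)
    (hD : ∫ y in (0:ℝ)..a, ‖deriv g y + ((2 * y / (a ^ 2 + δ - y ^ 2) : ℝ) : ℂ) * (g y - g a)‖ ^ 2
      ≤ D) :
    ‖g 0 - g a‖ ≤ 8 * a * ‖∫ y in (0:ℝ)..a, (rq a δ y : ℂ) * (g y - g a)‖ + 24 * √a * √D := by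
  have hgc := hg.continuous
  have hc : Continuous (deriv g) := hg.continuous_deriv le_rfl
  have hqc := rq_cont (a := a) hδ
  set p : ℝ → ℝ := fun y =>
    ‖deriv g y + ((2 * y / (a ^ 2 + δ - y ^ 2) : ℝ) : ℂ) * (g y - g a)‖ with hp
  have hs : ∀ y ∈ Set.Icc 0 a, 0 < a ^ 2 + δ - y ^ 2 := by
    intro y hy; have := hy.1; have := hy.2; nlinarith
  have hs' : ∀ y ∈ Set.Icc 0 a, ((a ^ 2 + δ - y ^ 2 : ℝ) : ℂ) ≠ 0 := by
    intro y hy; exact_mod_cast (hs y hy).ne'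
  have hsc : ContinuousOn (fun y : ℝ => 2 * y / (a ^ 2 + δ - y ^ 2)) (Set.Icc 0 a) := by
    apply ContinuousOn.div (by fun_prop) (by fun_prop)
    intro y hy; exact (hs y hy).ne'
  have hpc' : ContinuousOn (fun y : ℝ => deriv g y + ((2 * y / (a ^ 2 + δ - y ^ 2) : ℝ) : ℂ)
      * (g y - g a)) (Set.Icc 0 a) := by
    apply ContinuousOn.add hc.continuousOn
    exact (Complex.continuous_ofReal.comp_continuousOn hsc).mul (by fun_prop)
  have hpc : ContinuousOn p (Set.Icc 0 a) := hpc'.norm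
  set h : ℝ → ℂ := fun y => (g y - g a) / ((a ^ 2 + δ - y ^ 2 : ℝ) : ℂ) with hh
  have hhc : ContinuousOn h (Set.Icc 0 a) := by
    apply ContinuousOn.div (by fun_prop) (by fun_prop)
    exact hs'
  set h' : ℝ → ℂ := fun y => (deriv g y + ((2 * y / (a ^ 2 + δ - y ^ 2) : ℝ) : ℂ)
      * (g y - g a)) / ((a ^ 2 + δ - y ^ 2 : ℝ) : ℂ) with hh'
  have hhd : ∀ y ∈ Set.Icc 0 a, HasDerivAt h (h' y) y := by
    intro y hy
    have h1 : HasDerivAt g (deriv g y) y := ((hg.differentiable (by norm_num)) y).hasDerivAt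
    have h2 : HasDerivAt (fun y : ℝ => a ^ 2 + δ - y ^ 2) (-(2 * y)) y := by
      simpa using (hasDerivAt_pow 2 y).const_sub (a ^ 2 + δ)
    have h3 := (h1.sub_const (g a)).div h2.ofReal_comp (hs' y hy)
    refine h3.congr_deriv ?_
    have := hs' y hy
    simp only [hh']
    push_cast at this ⊢
    field_simp
    ring
  have hh'c : ContinuousOn h' (Set.Icc 0 a) := by
    apply ContinuousOn.div hpc' (by fun_prop)
    exact hs'
  have hD0 : 0 ≤ D := le_trans (intervalIntegral.integral_nonneg ha.le (fun t _ => sq_nonneg _)) hD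
  -- pointwise bound
  have hpt : ∀ y ∈ Set.Ioo 0 a, ‖h y - h 0‖ ≤ √D * (1 / a * |y - a| ^ (-(1:ℝ)/2)) := by
    intro y hy
    have hsub : Set.Icc 0 y ⊆ Set.Icc 0 a := Set.Icc_subset_Icc le_rfl hy.2.le
    have e1 : ∫ t in (0:ℝ)..y, h' t = h y - h 0 := by
      apply intervalIntegral.integral_eq_sub_of_hasDerivAt
      · intro t ht; rw [Set.uIcc_of_le hy.1.le] at ht; exact hhd t (hsub ht)
      · exact ContinuousOn.intervalIntegrable_of_Icc hy.1.le (hh'c.mono hsub)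
    have hrc : ContinuousOn (fun t : ℝ => 1 / (a ^ 2 + δ - t ^ 2)) (Set.Icc 0 y) := by
      apply ContinuousOn.div (by fun_prop) (by fun_prop)
      intro t ht; exact (hs t (hsub ht)).ne'
    have e2 : ‖h y - h 0‖ ≤ ∫ t in (0:ℝ)..y, p t * (1 / (a ^ 2 + δ - t ^ 2)) := by
      rw [← e1]
      refine (intervalIntegral.norm_integral_le_integral_norm hy.1.le).trans (le_of_eq ?_)
      apply intervalIntegral.integral_congr
      intro t ht; rw [Set.uIcc_of_le hy.1.le] at ht
      simp only [hh', hp]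
      rw [norm_div, Complex.norm_real, Real.norm_of_nonneg (hs t (hsub ht)).le]; ring
    have e3 := rr_cs hy.1.le (hpc.mono hsub) hrc
    have e4 : ∫ t in (0:ℝ)..y, p t ^ 2 ≤ D := by
      refine le_trans ?_ hD
      apply intervalIntegral.integral_mono_interval le_rfl hy.1.le hy.2.le
      · exact Filter.Eventually.of_forall (fun t => sq_nonneg _)
      · exact ContinuousOn.intervalIntegrable_of_Icc ha.le (hpc.pow 2)
    have hya : 0 < a - y := by linarith [hy.2]
    have e5 : ∫ t in (0:ℝ)..y, (1 / (a ^ 2 + δ - t ^ 2)) ^ 2 ≤ 1 / (a ^ 2 * (a - y)) := by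
      have f1 : ∫ t in (0:ℝ)..y, (1 / (a ^ 2 + δ - t ^ 2)) ^ 2
          ≤ ∫ t in (0:ℝ)..y, 1 / a ^ 2 * (1 / (a - t) ^ 2) := by
        apply intervalIntegral.integral_mono_on hy.1.le
        · exact ContinuousOn.intervalIntegrable_of_Icc hy.1.le (hrc.pow 2)
        · apply ContinuousOn.intervalIntegrable_of_Icc hy.1.le
          apply ContinuousOn.mul (by fun_prop)
          apply ContinuousOn.div (by fun_prop) (by fun_prop)
          intro t ht; have := ht.2; have : 0 < a - t := by linarith
          positivity
        · intro t ht
          have h1 := ht.1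
          have h2 : 0 < a - t := by linarith [ht.2]
          have h3 : a * (a - t) ≤ a ^ 2 + δ - t ^ 2 := by nlinarith
          calc (1 / (a ^ 2 + δ - t ^ 2)) ^ 2 ≤ (1 / (a * (a - t))) ^ 2 := by
                have : 0 < a * (a - t) := by positivity
                have : 0 < a ^ 2 + δ - t ^ 2 := by linarith
                gcongr
            _ = _ := by field_simp
      have f2 : ∫ t in (0:ℝ)..y, 1 / (a - t) ^ 2 = 1 / (a - y) - 1 / (a - 0) := by
        apply intervalIntegral.integral_eq_sub_of_hasDerivAt (f := fun t => 1 / (a - t))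
        · intro t ht; rw [Set.uIcc_of_le hy.1.le] at ht
          have h2 : a - t ≠ 0 := by have := ht.2; linarith
          have := ((hasDerivAt_id t).const_sub a).inv h2
          simp only [one_div]
          refine HasDerivAt.congr_deriv this ?_
          simp
        · apply ContinuousOn.intervalIntegrable_of_Icc hy.1.le
          apply ContinuousOn.div (by fun_prop) (by fun_prop)
          intro t ht; have := ht.2; have : 0 < a - t := by linarith
          positivity
      rw [intervalIntegral.integral_const_mul, f2] at f1
      refine f1.trans ?_
      rw [show 1 / (a ^ 2 * (a - y)) = 1 / a ^ 2 * (1 / (a - y)) by field_simp]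
      gcongr
      have : 0 < 1 / (a - 0) := by simpa using ha
      linarith
    have e6 : ‖h y - h 0‖ ^ 2 ≤ D * (1 / (a ^ 2 * (a - y))) := by
      calc ‖h y - h 0‖ ^ 2 ≤ _ := pow_le_pow_left₀ (norm_nonneg _) e2 2
        _ ≤ _ := e3
        _ ≤ _ := mul_le_mul e4 e5 (intervalIntegral.integral_nonneg hy.1.le
            (fun t _ => sq_nonneg _)) hD0
    have e7 : |y - a| ^ (-(1:ℝ) / 2) = 1 / √(a - y) := by
      rw [abs_sub_comm, abs_of_pos hya, neg_div, Real.rpow_neg hya.le, ← Real.sqrt_eq_rpow]; simp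
    rw [e7]
    have e8 : D * (1 / (a ^ 2 * (a - y))) = (√D * (1 / a * (1 / √(a - y)))) ^ 2 := by
      rw [mul_pow, mul_pow, div_pow, div_pow, Real.sq_sqrt hD0, Real.sq_sqrt hya.le]
      field_simp
    rw [e8] at e6
    exact le_of_sq_le_sq e6 (by positivity)
  -- the weight
  set w : ℝ → ℝ := fun y => rq a δ y * (a ^ 2 + δ - y ^ 2) with hw
  have hwc : Continuous w := by rw [hw]; fun_prop
  have hw0 : ∀ y ∈ Set.Icc 0 a, 0 ≤ w y := fun y hy =>
    mul_nonneg (rq_nonneg hy.1 hy.2) (hs y hy).le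
  have hw1 : ∀ y ∈ Set.Icc 0 a, w y ≤ 3 / 2 := by
    intro y hy
    simp only [hw, rq]
    rw [div_mul_eq_mul_div, div_le_iff₀ (by positivity)]
    nlinarith [sq_nonneg (a ^ 2 - y ^ 2 - δ)]
  have hw2 : ∀ y ∈ Set.Icc 0 (a / 2), 1 / 2 ≤ w y := by
    intro y hy
    simp only [hw, rq]
    rw [div_mul_eq_mul_div, le_div_iff₀ (by positivity)]
    have h1 : a ^ 2 - y ^ 2 ≥ δ / 2 := by have := hy.1; have := hy.2; nlinarith
    nlinarith
  have hS : a / 4 ≤ ∫ y in (0:ℝ)..a, w y := by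
    rw [← intervalIntegral.integral_add_adjacent_intervals (b := a / 2)
      (hwc.intervalIntegrable _ _) (hwc.intervalIntegrable _ _)]
    have h1 : ∫ y in (0:ℝ)..(a / 2), (1 / 2 : ℝ) ≤ ∫ y in (0:ℝ)..(a / 2), w y := by
      apply intervalIntegral.integral_mono_on (by linarith) (by simp) (hwc.intervalIntegrable _ _)
      exact hw2
    have h2 : 0 ≤ ∫ y in (a / 2)..a, w y := by
      apply intervalIntegral.integral_nonneg (by linarith)
      intro y hy; exact hw0 y ⟨by linarith [hy.1], hy.2⟩
    rw [intervalIntegral.integral_const, smul_eq_mul] at h1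
    linarith
  set Q := ∫ y in (0:ℝ)..a, (rq a δ y : ℂ) * (g y - g a) with hQ
  obtain ⟨hi, he⟩ := rr_int_left ha
  have hrem : ‖∫ y in (0:ℝ)..a, (w y : ℂ) * (h y - h 0)‖ ≤ 3 * √D / √a := by
    have hcont : ContinuousOn (fun y => (w y : ℂ) * (h y - h 0)) (Set.Icc 0 a) :=
      (Complex.continuous_ofReal.comp hwc).continuousOn.mul (hhc.sub continuousOn_const)
    calc _ ≤ ∫ y in (0:ℝ)..a, ‖(w y : ℂ) * (h y - h 0)‖ :=
          intervalIntegral.norm_integral_le_integral_norm ha.le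
      _ ≤ ∫ y in (0:ℝ)..a, 3 / 2 * √D / a * |y - a| ^ (-(1:ℝ) / 2) := by
          apply intervalIntegral.integral_mono_on_of_le_Ioo ha.le
          · exact ContinuousOn.intervalIntegrable_of_Icc ha.le hcont.norm
          · exact hi.const_mul _
          · intro y hy
            have hy' : y ∈ Set.Icc 0 a := ⟨hy.1.le, hy.2.le⟩
            rw [norm_mul, Complex.norm_real, Real.norm_of_nonneg (hw0 y hy')]
            calc w y * ‖h y - h 0‖ ≤ 3 / 2 * (√D * (1 / a * |y - a| ^ (-(1:ℝ)/2))) :=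
                  mul_le_mul (hw1 y hy') (hpt y hy) (norm_nonneg _) (by norm_num)
              _ = _ := by ring
      _ = 3 * √D / √a := by
          rw [intervalIntegral.integral_const_mul, he]
          have : √a ^ 2 = a := Real.sq_sqrt ha.le
          have h0 : √a ≠ 0 := by positivity
          field_simp
          rw [this]
  have hQe : Q = ((∫ y in (0:ℝ)..a, w y : ℝ) : ℂ) * h 0
      + ∫ y in (0:ℝ)..a, (w y : ℂ) * (h y - h 0) := by
    have hcont : ContinuousOn (fun y => (w y : ℂ) * (h y - h 0)) (Set.Icc 0 a) :=
      (Complex.continuous_ofReal.comp hwc).continuousOn.mul (hhc.sub continuousOn_const)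
    rw [← intervalIntegral.integral_ofReal, ← intervalIntegral.integral_mul_const,
      ← intervalIntegral.integral_add, hQ]
    · apply intervalIntegral.integral_congr
      intro y hy
      rw [Set.uIcc_of_le ha.le] at hy
      have := hs' y hy
      simp only
      have e : (w y : ℂ) * h y = rq a δ y * (g y - g a) := by
        simp only [hw, hh]
        rw [Complex.ofReal_mul]
        field_simp
      rw [← e]; ring
    · exact Continuous.intervalIntegrable (by fun_prop) _ _
    · exact ContinuousOn.intervalIntegrable_of_Icc ha.le hcont
  have hS0 : 0 ≤ ∫ y in (0:ℝ)..a, w y := by linarith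
  have h1 : (a / 4) * ‖h 0‖ ≤ ‖Q‖ + 3 * √D / √a := by
    calc (a / 4) * ‖h 0‖ ≤ (∫ y in (0:ℝ)..a, w y) * ‖h 0‖ := by gcongr
      _ = ‖((∫ y in (0:ℝ)..a, w y : ℝ) : ℂ) * h 0‖ := by
        rw [norm_mul, Complex.norm_real, Real.norm_of_nonneg hS0]
      _ = ‖Q - ∫ y in (0:ℝ)..a, (w y : ℂ) * (h y - h 0)‖ := by rw [hQe]; congr 1; ring
      _ ≤ _ := norm_sub_le _ _
      _ ≤ _ := by gcongr
  have h2 : ‖g 0 - g a‖ = (a ^ 2 + δ) * ‖h 0‖ := by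
    have h0 : (0:ℝ) < a ^ 2 + δ := by positivity
    simp only [hh]
    rw [norm_div, Complex.norm_real, Real.norm_of_nonneg (by simp; positivity)]
    simp only [ne_eq, OfNat.ofNat_ne_zero, not_false_eq_true, zero_pow, sub_zero]
    field_simp
  have h3 : √D / √a * a = √a * √D := by
    have : √a ^ 2 = a := Real.sq_sqrt ha.le
    have h0 : √a ≠ 0 := by positivity
    field_simp
    rw [this]
  rw [h2]
  calc (a ^ 2 + δ) * ‖h 0‖ ≤ (2 * a ^ 2) * ‖h 0‖ := by gcongr; linarith
    _ = 8 * a * ((a / 4) * ‖h 0‖) := by ring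
    _ ≤ 8 * a * (‖Q‖ + 3 * √D / √a) := by gcongr
    _ = 8 * a * ‖Q‖ + 24 * (√D / √a * a) := by ring
    _ = _ := by rw [h3]; ring

noncomputable def rc (a y : ℝ) : ℝ := min 1 (2 - y / a)

theorem rc_cont (a : ℝ) : Continuous (rc a) := by unfold rc; fun_prop

theorem rc_left {a y : ℝ} (ha : 0 < a) (hy : y ≤ a) : rc a y = 1 := by
  unfold rc
  apply min_eq_left
  have : y / a ≤ 1 := by rw [div_le_one ha]; exact hy
  linarith

theorem rc_right {a y : ℝ} (ha : 0 < a) (hy : a ≤ y) : rc a y = 2 - y / a := by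
  unfold rc
  apply min_eq_right
  have : 1 ≤ y / a := by rw [one_le_div ha]; exact hy
  linarith

theorem rc_le (a y : ℝ) : rc a y ≤ 1 := min_le_left _ _

theorem rc_nonneg {a y : ℝ} (ha : 0 < a) (hy : y ≤ 2 * a) : 0 ≤ rc a y := by
  unfold rc
  apply le_min zero_le_one
  have : y / a ≤ 2 := by rw [div_le_iff₀ ha]; exact hy
  linarith

theorem rr_E {g : ℝ → ℂ} (hg : ContDiff ℝ 1 g) {a δ K X : ℝ} (ha : 0 < a) (hδ : 0 < δ)
    (hK : ∫ y in a..(2 * a), ‖deriv g y‖ ^ 2 ≤ K)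
    (hX : ∫ y in (0:ℝ)..(2 * a), rd a δ y * ‖g y‖ ^ 2 ≤ X) :
    ‖∫ y in (0:ℝ)..a, (rq a δ y : ℂ) * (g y - g a)‖
      ≤ ‖∫ y in (0:ℝ)..(2 * a), (rc a y : ℂ) * (((rq a δ y : ℂ) - Complex.I * (rd a δ y : ℂ)) * g y)‖
        + √(4 / a) * √X + 2 * ‖g a‖ / a + 2 * √K / √a := by
  have hgc := hg.continuous
  have hc : Continuous (deriv g) := hg.continuous_deriv le_rfl
  have hqc := rq_cont (a := a) hδ
  have hdc := rd_cont (a := a) hδ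
  have hcc := rc_cont a
  have h2a : a ≤ 2 * a := by linarith
  have h2a0 : 0 ≤ 2 * a := by linarith
  have hK0 : 0 ≤ K := le_trans (intervalIntegral.integral_nonneg h2a (fun t _ => sq_nonneg _)) hK
  have hX0 : 0 ≤ X := le_trans (intervalIntegral.integral_nonneg h2a0
    (fun t _ => mul_nonneg (rd_nonneg hδ t) (sq_nonneg _))) hX
  set Q := ∫ y in (0:ℝ)..a, (rq a δ y : ℂ) * (g y - g a) with hQ
  set T := ∫ y in (0:ℝ)..(2 * a),
    (rc a y : ℂ) * (((rq a δ y : ℂ) - Complex.I * (rd a δ y : ℂ)) * g y) with hT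
  -- the rd part
  set Z := ∫ y in (0:ℝ)..(2 * a), (rc a y : ℂ) * ((rd a δ y : ℂ) * g y) with hZ
  have hZb : ‖Z‖ ≤ √(4 / a) * √X := by
    have hsc : Continuous (fun y => √(rd a δ y)) := by fun_prop
    have h1 : ‖Z‖ ≤ ∫ y in (0:ℝ)..(2 * a), √(rd a δ y) * (√(rd a δ y) * ‖g y‖) := by
      refine (intervalIntegral.norm_integral_le_integral_norm h2a0).trans ?_
      apply intervalIntegral.integral_mono_on h2a0
        (Continuous.intervalIntegrable (by fun_prop) _ _)
        (Continuous.intervalIntegrable (by fun_prop) _ _)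
      intro y hy
      have h0 := rd_nonneg (a := a) hδ y
      rw [norm_mul, norm_mul, Complex.norm_real, Complex.norm_real, Real.norm_of_nonneg h0,
        Real.norm_of_nonneg (rc_nonneg ha hy.2), ← mul_assoc, ← mul_assoc, Real.mul_self_sqrt h0]
      gcongr
      calc rc a y * rd a δ y ≤ 1 * rd a δ y := by gcongr; exact rc_le a y
        _ = _ := one_mul _
    have h2 := rr_cs h2a0 (p := fun y => √(rd a δ y)) (r := fun y => √(rd a δ y) * ‖g y‖)
      (by fun_prop) (by fun_prop)
    have e1 : ∫ y in (0:ℝ)..(2 * a), √(rd a δ y) ^ 2 = ∫ y in (0:ℝ)..(2 * a), rd a δ y := by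
      congr 1; ext y; exact Real.sq_sqrt (rd_nonneg hδ y)
    have e2 : ∫ y in (0:ℝ)..(2 * a), (√(rd a δ y) * ‖g y‖) ^ 2
        = ∫ y in (0:ℝ)..(2 * a), rd a δ y * ‖g y‖ ^ 2 := by
      congr 1; ext y; rw [mul_pow, Real.sq_sqrt (rd_nonneg hδ y)]
    rw [e1, e2] at h2
    have h3 := rd_int ha hδ h2a0
    have h4 : ‖Z‖ ^ 2 ≤ (4 / a) * X := by
      calc ‖Z‖ ^ 2 ≤ _ := pow_le_pow_left₀ (norm_nonneg _) h1 2
        _ ≤ _ := h2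
        _ ≤ _ := mul_le_mul h3 hX (intervalIntegral.integral_nonneg h2a0
          (fun t _ => mul_nonneg (rd_nonneg hδ t) (sq_nonneg _))) (by positivity)
    rw [← Real.sqrt_mul (by positivity)]
    exact Real.le_sqrt_of_sq_le h4
  set P := ∫ y in (0:ℝ)..(2 * a), (rc a y : ℂ) * ((rq a δ y : ℂ) * g y) with hP
  have hTP : T = P - Complex.I * Z := by
    rw [hT, hP, hZ, ← intervalIntegral.integral_const_mul, ← intervalIntegral.integral_sub
      (Continuous.intervalIntegrable (by fun_prop) _ _)
      (Continuous.intervalIntegrable (by fun_prop) _ _)]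
    congr 1; ext y; ring
  -- third part
  set R := ∫ y in a..(2 * a), (rc a y : ℂ) * ((rq a δ y : ℂ) * (g y - g a)) with hR
  have hRb : ‖R‖ ≤ 2 * √K / √a := by
    have h1 := rq_holder_right ha hδ (c := √K) (v := fun y => ‖g y - g a‖) (by fun_prop) (by
      intro y hy
      have h1 := rr_holder hg hy.1
      have h2 : ∫ t in a..y, ‖deriv g t‖ ^ 2 ≤ K := by
        refine le_trans ?_ hK
        apply intervalIntegral.integral_mono_interval le_rfl hy.1 hy.2
        · exact Filter.Eventually.of_forall (fun t => sq_nonneg _)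
        · exact Continuous.intervalIntegrable (by fun_prop) _ _
      have hya : 0 ≤ y - a := by linarith [hy.1]
      rw [abs_of_nonneg (norm_nonneg _), abs_of_nonneg hya, ← Real.sqrt_mul hK0]
      apply Real.le_sqrt_of_sq_le
      refine h1.trans ?_
      rw [mul_comm]
      exact mul_le_mul_of_nonneg_right h2 hya)
    refine le_trans ?_ h1
    refine (intervalIntegral.norm_integral_le_integral_norm h2a).trans ?_
    apply intervalIntegral.integral_mono_on h2a
        (Continuous.intervalIntegrable (by fun_prop) _ _)
        (Continuous.intervalIntegrable (by fun_prop) _ _)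
    intro y hy
    rw [norm_mul, norm_mul, Complex.norm_real, Complex.norm_real,
        Real.norm_of_nonneg (rc_nonneg ha hy.2), abs_of_nonneg (norm_nonneg (g y - g a)),
        Real.norm_eq_abs]
    calc rc a y * (|rq a δ y| * ‖g y - g a‖) ≤ 1 * (|rq a δ y| * ‖g y - g a‖) := by
          gcongr; exact rc_le a y
      _ = _ := one_mul _
  -- second part
  set c1 := (∫ y in (0:ℝ)..a, rq a δ y) + ∫ y in a..(2 * a), rq a δ y with hc1
  set c2 := ∫ y in a..(2 * a), rq a δ y * (rc a y - 1) with hc2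
  have hc2b : |c2| ≤ 1 / a := by
    rw [← Real.norm_eq_abs]
    refine (intervalIntegral.norm_integral_le_of_norm_le_const (C := 1 / a ^ 2) ?_).trans ?_
    · intro y hy
      rw [Set.uIoc_of_le h2a] at hy
      rw [rc_right ha hy.1.le, Real.norm_eq_abs, abs_mul]
      have h1 := rq_abs (δ := δ) ha hδ (show 0 ≤ y by linarith [hy.1])
      have e : |2 - y / a - 1| = |y - a| / a := by
        rw [show 2 - y / a - 1 = -((y - a) / a) by field_simp; ring, abs_neg, abs_div,
          abs_of_pos ha]
      rw [e, le_div_iff₀ (by positivity)]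
      calc |rq a δ y| * (|y - a| / a) * a ^ 2 = |rq a δ y| * (a * |y - a|) := by field_simp
        _ ≤ 1 := h1
    · rw [show 2 * a - a = a by ring, abs_of_pos ha]
      apply le_of_eq; field_simp
  have hPe : P = Q + g a * ((c1 + c2 : ℝ) : ℂ) + R := by
    have s1 : P = (∫ y in (0:ℝ)..a, (rq a δ y : ℂ) * g y)
        + ∫ y in a..(2 * a), (rc a y : ℂ) * ((rq a δ y : ℂ) * g y) := by
      rw [hP, ← intervalIntegral.integral_add_adjacent_intervals (b := a)
        (Continuous.intervalIntegrable (by fun_prop) _ _)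
        (Continuous.intervalIntegrable (by fun_prop) _ _)]
      congr 1
      apply intervalIntegral.integral_congr
      intro y hy
      rw [Set.uIcc_of_le ha.le] at hy
      simp only [rc_left ha hy.2]; simp
    have s2 : ∫ y in (0:ℝ)..a, (rq a δ y : ℂ) * g y
        = Q + g a * ((∫ y in (0:ℝ)..a, rq a δ y : ℝ) : ℂ) := by
      rw [hQ, ← intervalIntegral.integral_ofReal, ← intervalIntegral.integral_const_mul,
        ← intervalIntegral.integral_add
        (Continuous.intervalIntegrable (by fun_prop) _ _)
        (Continuous.intervalIntegrable (by fun_prop) _ _)]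
      congr 1; ext y; ring
    have s3 : ∫ y in a..(2 * a), (rc a y : ℂ) * ((rq a δ y : ℂ) * g y)
        = R + (g a * ((∫ y in a..(2 * a), rq a δ y : ℝ) : ℂ) + g a * (c2 : ℂ)) := by
      rw [hR, hc2, ← intervalIntegral.integral_ofReal, ← intervalIntegral.integral_ofReal,
        ← intervalIntegral.integral_const_mul, ← intervalIntegral.integral_const_mul,
        ← intervalIntegral.integral_add
        (Continuous.intervalIntegrable (by fun_prop) _ _)
        (Continuous.intervalIntegrable (by fun_prop) _ _),
        ← intervalIntegral.integral_add
        (Continuous.intervalIntegrable (by fun_prop) _ _)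
        (Continuous.intervalIntegrable (by fun_prop) _ _)]
      congr 1; ext y; push_cast; ring
    rw [s1, s2, s3, hc1]; push_cast; ring
  have hpv := rq_pv ha hδ
  have hc12 : |c1 + c2| ≤ 2 / a := by
    refine (abs_add_le _ _).trans ?_
    have : (2:ℝ) / a = 1 / a + 1 / a := by ring
    rw [this]; exact add_le_add hpv hc2b
  have hQT : Q = T + Complex.I * Z - g a * ((c1 + c2 : ℝ) : ℂ) - R := by
    rw [hTP, hPe]; ring
  rw [hQT]
  have b1 : ‖Complex.I * Z‖ ≤ √(4 / a) * √X := by simpa using hZb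
  have b2 : ‖g a * ((c1 + c2 : ℝ) : ℂ)‖ ≤ 2 * ‖g a‖ / a := by
    rw [norm_mul, Complex.norm_real, Real.norm_eq_abs]
    calc ‖g a‖ * |c1 + c2| ≤ ‖g a‖ * (2 / a) := by gcongr
      _ = _ := by ring
  calc _ ≤ ‖T‖ + ‖Complex.I * Z‖ + ‖g a * ((c1 + c2 : ℝ) : ℂ)‖ + ‖R‖ := by
        refine (norm_sub_le _ _).trans ?_
        gcongr
        refine (norm_sub_le _ _).trans ?_
        gcongr
        exact norm_add_le _ _
    _ ≤ _ := by gcongr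

/-- test identity -/
theorem rr_T {Φ : ℝ → ℂ} (hΦ : ContDiff ℝ 2 Φ) {a : ℝ} (ha : 0 < a) (h0 : deriv Φ 0 = 0) :
    ∫ y in (0:ℝ)..(2 * a), (rc a y : ℂ) * deriv (deriv Φ) y = (Φ (2 * a) - Φ a) / (a : ℂ) := by
  have hd1 : ContDiff ℝ 1 (deriv Φ) := hΦ.deriv' 
  have hc1 : Continuous (deriv Φ) := hd1.continuous
  have hc2 : Continuous (deriv (deriv Φ)) := hd1.continuous_deriv le_rfl
  have hcc := rc_cont a
  have h1 : ∀ y, HasDerivAt Φ (deriv Φ y) y := fun y =>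
    ((hΦ.differentiable (by norm_num)) y).hasDerivAt
  have h2 : ∀ y, HasDerivAt (deriv Φ) (deriv (deriv Φ) y) y := fun y =>
    ((hd1.differentiable (by norm_num)) y).hasDerivAt
  have ha' : (a : ℂ) ≠ 0 := by exact_mod_cast ha.ne'
  rw [← intervalIntegral.integral_add_adjacent_intervals (b := a)
        (Continuous.intervalIntegrable (by fun_prop) _ _)
        (Continuous.intervalIntegrable (by fun_prop) _ _)]
  have e1 : ∫ y in (0:ℝ)..a, (rc a y : ℂ) * deriv (deriv Φ) y = deriv Φ a - deriv Φ 0 := by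
    rw [← intervalIntegral.integral_eq_sub_of_hasDerivAt (fun y _ => h2 y)
      (hc2.intervalIntegrable _ _)]
    apply intervalIntegral.integral_congr
    intro y hy
    rw [Set.uIcc_of_le ha.le] at hy
    simp only [rc_left ha hy.2]; simp
  have e2 : ∫ y in a..(2 * a), (rc a y : ℂ) * deriv (deriv Φ) y
      = ((2 - ((2 * a : ℝ) : ℂ) / a) * deriv Φ (2 * a) + Φ (2 * a) / a)
        - ((2 - (a : ℂ) / a) * deriv Φ a + Φ a / a) := by
    rw [← intervalIntegral.integral_eq_sub_of_hasDerivAt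
      (f := fun y : ℝ => (2 - (y : ℂ) / a) * deriv Φ y + Φ y / a)
      (f' := fun y : ℝ => (2 - (y : ℂ) / a) * deriv (deriv Φ) y)]
    · apply intervalIntegral.integral_congr
      intro y hy
      rw [Set.uIcc_of_le (by linarith)] at hy
      simp only [rc_right ha hy.1]; simp
    · intro y _
      have k1 : HasDerivAt (fun y : ℝ => (2 - (y : ℂ) / a)) (-(1 / (a : ℂ))) y :=
        ((hasDerivAt_id y).ofReal_comp.div_const (a : ℂ)).const_sub 2 |>.congr_deriv (by simp)
      refine ((k1.mul (h2 y)).add ((h1 y).div_const (a : ℂ))).congr_deriv ?_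
      ring
    · exact Continuous.intervalIntegrable (by fun_prop) _ _
  rw [e1, e2, h0]
  push_cast
  field_simp
  ring

theorem rr_nsq (u v : ℂ) : ‖u + v‖ ^ 2 ≤ 2 * (‖u‖ ^ 2 + ‖v‖ ^ 2) := by
  have := norm_add_le u v
  nlinarith [norm_nonneg (u + v), sq_nonneg (‖u‖ - ‖v‖), norm_nonneg u, norm_nonneg v]

theorem rr_par {x y : ℝ} (h : x ≤ y) {u v : ℝ → ℂ} {w : ℝ → ℝ}
    (hu : ContinuousOn u (Set.Icc x y)) (hv : ContinuousOn v (Set.Icc x y))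
    (hw : ContinuousOn w (Set.Icc x y)) (hw0 : ∀ t ∈ Set.Icc x y, 0 ≤ w t) :
    ∫ t in x..y, w t * ‖u t + v t‖ ^ 2
      ≤ 2 * ((∫ t in x..y, w t * ‖u t‖ ^ 2) + ∫ t in x..y, w t * ‖v t‖ ^ 2) := by
  have i1 : IntervalIntegrable (fun t => w t * ‖u t‖ ^ 2) volume x y :=
    ContinuousOn.intervalIntegrable_of_Icc h (by fun_prop)
  have i2 : IntervalIntegrable (fun t => w t * ‖v t‖ ^ 2) volume x y :=
    ContinuousOn.intervalIntegrable_of_Icc h (by fun_prop)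
  rw [← intervalIntegral.integral_add i1 i2, ← intervalIntegral.integral_const_mul]
  apply intervalIntegral.integral_mono_on h
    (ContinuousOn.intervalIntegrable_of_Icc h (by fun_prop))
    (ContinuousOn.intervalIntegrable_of_Icc h (by fun_prop))
  intro t ht
  calc w t * ‖u t + v t‖ ^ 2 ≤ w t * (2 * (‖u t‖ ^ 2 + ‖v t‖ ^ 2)) :=
        mul_le_mul_of_nonneg_left (rr_nsq _ _) (hw0 t ht)
    _ = _ := by ring

theorem rr_par1 {x y : ℝ} (h : x ≤ y) {u v : ℝ → ℂ}
    (hu : ContinuousOn u (Set.Icc x y)) (hv : ContinuousOn v (Set.Icc x y)) :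
    ∫ t in x..y, ‖u t + v t‖ ^ 2
      ≤ 2 * ((∫ t in x..y, ‖u t‖ ^ 2) + ∫ t in x..y, ‖v t‖ ^ 2) := by
  have := rr_par h hu hv (w := fun _ => 1) (by fun_prop) (fun _ _ => zero_le_one)
  simpa using this

theorem rr_refl {g : ℝ → ℂ} {n : WithTop ℕ∞} (hg : ContDiff ℝ n g) :
    ContDiff ℝ n (fun y => g (-y)) := hg.comp contDiff_neg

theorem rr_refl_d (g : ℝ → ℂ) : deriv (fun y => g (-y)) = fun y => -deriv g (-y) := by
  ext y; exact deriv_comp_neg g y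

theorem rr_l1 {x y : ℝ} (h : x ≤ y) {u : ℝ → ℂ} (hu : ContinuousOn u (Set.Icc x y)) {c : ℝ → ℝ}
    (hc : ContinuousOn c (Set.Icc x y)) (hc1 : ∀ t ∈ Set.Icc x y, |c t| ≤ 1) :
    ‖∫ t in x..y, (c t : ℂ) * u t‖ ^ 2 ≤ (y - x) * ∫ t in x..y, ‖u t‖ ^ 2 := by
  have h2 : ‖∫ t in x..y, (c t : ℂ) * u t‖ ≤ ∫ t in x..y, 1 * ‖u t‖ := by
    refine (intervalIntegral.norm_integral_le_integral_norm h).trans ?_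
    have hc' : ContinuousOn (fun t => (c t : ℂ)) (Set.Icc x y) :=
      Complex.continuous_ofReal.comp_continuousOn hc
    apply intervalIntegral.integral_mono_on h
      (ContinuousOn.intervalIntegrable_of_Icc h (by fun_prop))
      (ContinuousOn.intervalIntegrable_of_Icc h (by fun_prop))
    intro t ht
    rw [norm_mul, Complex.norm_real, Real.norm_eq_abs]
    gcongr; exact hc1 t ht
  have h3 := rr_cs h (p := fun _ => 1) (r := fun t => ‖u t‖) (by fun_prop) (by fun_prop)
  calc _ ≤ (∫ t in x..y, 1 * ‖u t‖) ^ 2 := by gcongr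
    _ ≤ _ := h3
    _ = _ := by simp

theorem rr_mono {x y z w : ℝ} {u : ℝ → ℝ} (hu : Continuous u) (h0 : ∀ t, 0 ≤ u t)
    (h1 : x ≤ z) (h2 : z ≤ w) (h3 : w ≤ y) : ∫ t in z..w, u t ≤ ∫ t in x..y, u t :=
  intervalIntegral.integral_mono_interval h1 h2 h3 (Filter.Eventually.of_forall h0)
    (hu.intervalIntegrable _ _)

set_option maxHeartbeats 2000000 in
theorem rr_b {g Φ W : ℝ → ℂ} (hg : ContDiff ℝ 1 g) (hΦ : ContDiff ℝ 2 Φ) {k a δ R : ℝ}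
    (ha : 0 < a) (h2a : 2 * a ≤ 1) (hk : 0 ≤ k) (hka : k * a ≤ 1 / 2) (hδ : 0 < δ)
    (hda : δ ≤ a ^ 2)
    (hW : ∀ y ∈ Set.Icc (-1:ℝ) 1, W y = -(((rq a δ y : ℂ) - Complex.I * (rd a δ y : ℂ)) * g y))
    (hO : ∀ y ∈ Set.Icc (-1:ℝ) 1, deriv (deriv Φ) y - (k : ℂ) ^ 2 * Φ y = W y)
    (hD : (∫ y in (0:ℝ)..a, ‖deriv g y
        + ((2 * y / (a ^ 2 + δ - y ^ 2) : ℝ) : ℂ) * (g y - g a)‖ ^ 2)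
      + (∫ y in (0:ℝ)..a, ‖-deriv g (-y)
        + ((2 * y / (a ^ 2 + δ - y ^ 2) : ℝ) : ℂ) * (g (-y) - g (-a))‖ ^ 2) ≤ 2 * R)
    (hKo : (∫ y in a..1, ‖deriv g y‖ ^ 2) + (∫ y in a..1, ‖-deriv g (-y)‖ ^ 2) ≤ 2 * R)
    (hX : (∫ y in (0:ℝ)..1, rd a δ y * ‖g y‖ ^ 2)
      + (∫ y in (0:ℝ)..1, rd a δ y * ‖g (-y)‖ ^ 2) ≤ R)
    (hγ : ‖g a‖ ^ 2 + ‖g (-a)‖ ^ 2 ≤ a * R)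
    (hPo : (∫ y in a..1, ‖deriv Φ y‖ ^ 2) + (∫ y in a..1, ‖-deriv Φ (-y)‖ ^ 2) ≤ 2 * R)
    (hPk : k ^ 2 * ((∫ y in (0:ℝ)..1, ‖Φ y‖ ^ 2) + (∫ y in (0:ℝ)..1, ‖Φ (-y)‖ ^ 2)) ≤ 2 * R) :
    ‖g 0 - g a‖ ^ 2 + ‖g 0 - g (-a)‖ ^ 2 ≤ 26000 * (a * R) := by
  have hgc := hg.continuous
  have hgd : Continuous (deriv g) := hg.continuous_deriv le_rfl
  have hΦc := hΦ.continuous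
  have hΦd : Continuous (deriv Φ) := hΦ.continuous_deriv (by norm_num)
  have hdc := rd_cont (a := a) hδ
  have hqc := rq_cont (a := a) hδ
  have hcc := rc_cont a
  have h2a' : a ≤ 2 * a := by linarith
  have haR : 0 ≤ a * R := le_trans (by positivity) hγ
  have hR0 : 0 ≤ R := by
    by_contra h; push Not at h; nlinarith
  -- even parts
  set e : ℝ → ℂ := fun y => g y + g (-y) with he
  set P : ℝ → ℂ := fun y => Φ y + Φ (-y) with hP
  have heC : ContDiff ℝ 1 e := hg.add (rr_refl hg)
  have hPC : ContDiff ℝ 2 P := hΦ.add (rr_refl hΦ)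
  have hdiff : ∀ y, DifferentiableAt ℝ g y := hg.differentiable (by norm_num)
  have hdiff' : ∀ y, DifferentiableAt ℝ (fun y => g (-y)) y :=
    (rr_refl hg).differentiable (by norm_num)
  have hed : ∀ y, deriv e y = deriv g y + -deriv g (-y) := by
    intro y
    have := deriv_add (hdiff y) (hdiff' y)
    rw [rr_refl_d] at this
    exact this
  have hPd : deriv P = fun y => deriv Φ y + -deriv Φ (-y) := by
    ext y
    have := deriv_add ((hΦ.differentiable (by norm_num)) y)
      (((rr_refl hΦ).differentiable (by norm_num)) y)
    rw [rr_refl_d] at this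
    exact this
  have hd1 : ContDiff ℝ 1 (deriv Φ) := hΦ.deriv'
  have hPdd : ∀ y, deriv (deriv P) y = deriv (deriv Φ) y + deriv (deriv Φ) (-y) := by
    intro y
    rw [hPd]
    have := deriv_add ((hd1.differentiable (by norm_num)) y)
      (((rr_refl hd1).differentiable (by norm_num)) y).neg
    have e2 : deriv (-fun y => deriv Φ (-y)) y = deriv (deriv Φ) (-y) := by
      rw [deriv.neg, rr_refl_d]; simp
    rw [e2] at this
    exact this
  have hP0 : deriv P 0 = 0 := by rw [hPd]; simp
  -- T
  set T := ∫ y in (0:ℝ)..(2 * a),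
    (rc a y : ℂ) * (((rq a δ y : ℂ) - Complex.I * (rd a δ y : ℂ)) * e y) with hT
  have hPcc : Continuous (deriv (deriv P)) := hPC.deriv'.continuous_deriv le_rfl
  have hTe : T = -((P (2 * a) - P a) / (a : ℂ)
      - (k : ℂ) ^ 2 * ∫ y in (0:ℝ)..(2 * a), (rc a y : ℂ) * P y) := by
    rw [← rr_T hPC ha hP0, ← intervalIntegral.integral_const_mul,
      ← intervalIntegral.integral_sub, ← intervalIntegral.integral_neg, hT]
    · apply intervalIntegral.integral_congr
      intro y hy
      rw [Set.uIcc_of_le (by linarith)] at hy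
      have m1 : y ∈ Set.Icc (-1:ℝ) 1 := ⟨by linarith [hy.1], by linarith [hy.2]⟩
      have m2 : -y ∈ Set.Icc (-1:ℝ) 1 := ⟨by linarith [hy.2], by linarith [hy.1]⟩
      have o1 := hO y m1
      have o2 := hO (-y) m2
      rw [hW y m1] at o1
      rw [hW (-y) m2] at o2
      have q1 : rq a δ (-y) = rq a δ y := by simp [rq]
      have q2 : rd a δ (-y) = rd a δ y := by simp [rd]
      rw [q1, q2] at o2
      simp only [hPdd]
      simp only [he, hP]
      linear_combination (rc a y : ℂ) * (o1 + o2)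
    · exact Continuous.intervalIntegrable (by fun_prop) _ _
    · exact Continuous.intervalIntegrable (by fun_prop) _ _
  set r := √R with hr
  have hr2 : r ^ 2 = R := Real.sq_sqrt hR0
  have hr0 : 0 ≤ r := Real.sqrt_nonneg _
  set b := √a with hb
  have hb2 : b ^ 2 = a := Real.sq_sqrt ha.le
  have hb0 : 0 < b := Real.sqrt_pos.mpr ha
  have hT1 : b * ‖(P (2 * a) - P a) / (a : ℂ)‖ ≤ 2 * r := by
    have h1 := rr_holder (hPC.of_le (by norm_num)) h2a'
    rw [hPd] at h1
    have h2 := rr_par1 h2a' (u := deriv Φ) (v := fun y => -deriv Φ (-y)) (by fun_prop) (by fun_prop)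
    have h3 := rr_mono (x := a) (y := 1) (z := a) (w := 2 * a) (u := fun y => ‖deriv Φ y‖ ^ 2)
      (by fun_prop) (fun t => sq_nonneg _) le_rfl h2a' h2a
    have h4 := rr_mono (x := a) (y := 1) (z := a) (w := 2 * a)
      (u := fun y => ‖-deriv Φ (-y)‖ ^ 2)
      (by fun_prop) (fun t => sq_nonneg _) le_rfl h2a' h2a
    have h5 : ‖P (2 * a) - P a‖ ^ 2 ≤ a * (4 * R) := by
      refine h1.trans ?_
      rw [show 2 * a - a = a by ring]
      gcongr
      linarith
    have h6 : ‖P (2 * a) - P a‖ ≤ b * (2 * r) := by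
      apply le_of_sq_le_sq _ (by positivity)
      refine h5.trans (le_of_eq ?_)
      rw [mul_pow, mul_pow, hb2, hr2]; ring
    rw [norm_div, Complex.norm_real, Real.norm_of_nonneg ha.le, mul_div_assoc', div_le_iff₀ ha]
    calc b * ‖P (2 * a) - P a‖ ≤ b * (b * (2 * r)) := by gcongr
      _ = b ^ 2 * (2 * r) := by ring
      _ = _ := by rw [hb2]; ring
  have hT2 : b * ‖(k : ℂ) ^ 2 * ∫ y in (0:ℝ)..(2 * a), (rc a y : ℂ) * P y‖ ≤ 2 * r := by
    set Z := ∫ y in (0:ℝ)..(2 * a), (rc a y : ℂ) * P y with hZ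
    have h1 : ‖Z‖ ^ 2 ≤ _ := rr_l1 (x := 0) (y := 2 * a) (by linarith) (u := P) (c := rc a)
      hPC.continuous.continuousOn hcc.continuousOn (fun t ht => by
        rw [abs_of_nonneg (rc_nonneg ha ht.2)]; exact rc_le a t)
    have h2 := rr_par1 (x := 0) (y := 2 * a) (by linarith) (u := Φ) (v := fun y => Φ (-y))
      (by fun_prop) (by fun_prop)
    have h3 := rr_mono (x := 0) (y := 1) (z := 0) (w := 2 * a) (u := fun y => ‖Φ y‖ ^ 2)
      (by fun_prop) (fun t => sq_nonneg _) le_rfl (by linarith) h2a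
    have h4 := rr_mono (x := 0) (y := 1) (z := 0) (w := 2 * a)
      (u := fun y => ‖Φ (-y)‖ ^ 2)
      (by fun_prop) (fun t => sq_nonneg _) le_rfl (by linarith) h2a
    set S := (∫ y in (0:ℝ)..1, ‖Φ y‖ ^ 2) + (∫ y in (0:ℝ)..1, ‖Φ (-y)‖ ^ 2) with hS
    have h5 : ‖Z‖ ^ 2 ≤ 4 * a * S := by
      refine h1.trans ?_
      have : ∫ t in (0:ℝ)..(2 * a), ‖P t‖ ^ 2 ≤ 2 * S := by
        refine h2.trans ?_
        rw [hS]; linarith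
      calc (2 * a - 0) * ∫ t in (0:ℝ)..(2 * a), ‖P t‖ ^ 2 ≤ (2 * a - 0) * (2 * S) := by
            gcongr; linarith
        _ = _ := by ring
    rw [norm_mul, norm_pow, Complex.norm_real, Real.norm_of_nonneg hk]
    apply le_of_sq_le_sq _ (by positivity)
    have hka2 : (k * a) ^ 2 ≤ 1 / 4 := by
      calc (k * a) ^ 2 ≤ (1 / 2) ^ 2 := by gcongr
        _ = _ := by norm_num
    calc (b * (k ^ 2 * ‖Z‖)) ^ 2 = b ^ 2 * k ^ 4 * ‖Z‖ ^ 2 := by ring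
      _ ≤ b ^ 2 * k ^ 4 * (4 * a * S) := by gcongr
      _ = 4 * (k * a) ^ 2 * (k ^ 2 * S) := by rw [hb2]; ring
      _ ≤ 4 * (1 / 4) * (2 * R) := by
        have hS0 : 0 ≤ S := add_nonneg
          (intervalIntegral.integral_nonneg zero_le_one (fun t _ => sq_nonneg _))
          (intervalIntegral.integral_nonneg zero_le_one (fun t _ => sq_nonneg _))
        have : 0 ≤ k ^ 2 * S := by positivity
        gcongr
      _ ≤ 4 * R := by linarith
      _ = _ := by rw [mul_pow, hr2]; ring
  have hTb : b * ‖T‖ ≤ 4 * r := by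
    rw [hTe, norm_neg]
    calc _ ≤ b * (‖(P (2 * a) - P a) / (a : ℂ)‖
          + ‖(k : ℂ) ^ 2 * ∫ y in (0:ℝ)..(2 * a), (rc a y : ℂ) * P y‖) := by
          gcongr; exact norm_sub_le _ _
      _ ≤ _ := by linarith
  -- apply rr_E
  have hKe : ∫ y in a..(2 * a), ‖deriv e y‖ ^ 2 ≤ 4 * R := by
    simp only [hed]
    have h2 := rr_par1 h2a' (u := deriv g) (v := fun y => -deriv g (-y)) (by fun_prop) (by fun_prop)
    have h3 := rr_mono (x := a) (y := 1) (z := a) (w := 2 * a) (u := fun y => ‖deriv g y‖ ^ 2)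
      (by fun_prop) (fun t => sq_nonneg _) le_rfl h2a' h2a
    have h4 := rr_mono (x := a) (y := 1) (z := a) (w := 2 * a)
      (u := fun y => ‖-deriv g (-y)‖ ^ 2)
      (by fun_prop) (fun t => sq_nonneg _) le_rfl h2a' h2a
    linarith
  have hXe : ∫ y in (0:ℝ)..(2 * a), rd a δ y * ‖e y‖ ^ 2 ≤ 2 * R := by
    have h2 := rr_par (x := 0) (y := 2 * a) (by linarith) (u := g) (v := fun y => g (-y))
      (w := rd a δ) (by fun_prop) (by fun_prop) (by fun_prop) (fun t _ => rd_nonneg hδ t)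
    have h3 := rr_mono (x := 0) (y := 1) (z := 0) (w := 2 * a)
      (u := fun y => rd a δ y * ‖g y‖ ^ 2)
      (by fun_prop) (fun t => mul_nonneg (rd_nonneg hδ t) (sq_nonneg _)) le_rfl (by linarith) h2a
    have h4 := rr_mono (x := 0) (y := 1) (z := 0) (w := 2 * a)
      (u := fun y => rd a δ y * ‖g (-y)‖ ^ 2)
      (by fun_prop) (fun t => mul_nonneg (rd_nonneg hδ t) (sq_nonneg _)) le_rfl (by linarith) h2a
    simp only [he]
    linarith
  have hE := rr_E heC ha hδ hKe hXe
  rw [← hT] at hE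
  have hDe : ∫ y in (0:ℝ)..a, ‖deriv e y
      + ((2 * y / (a ^ 2 + δ - y ^ 2) : ℝ) : ℂ) * (e y - e a)‖ ^ 2 ≤ 4 * R := by
    have hsc : ContinuousOn (fun y : ℝ => ((2 * y / (a ^ 2 + δ - y ^ 2) : ℝ) : ℂ))
        (Set.Icc 0 a) := by
      apply Complex.continuous_ofReal.comp_continuousOn
      apply ContinuousOn.div (by fun_prop) (by fun_prop)
      intro y hy; have := hy.1; have := hy.2; nlinarith
    have h2 := rr_par1 ha.le
      (u := fun y => deriv g y + ((2 * y / (a ^ 2 + δ - y ^ 2) : ℝ) : ℂ) * (g y - g a))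
      (v := fun y => -deriv g (-y) + ((2 * y / (a ^ 2 + δ - y ^ 2) : ℝ) : ℂ) * (g (-y) - g (-a)))
      (ContinuousOn.add (by fun_prop) (hsc.mul (by fun_prop)))
      (ContinuousOn.add (by fun_prop) (hsc.mul (by fun_prop)))
    refine le_trans (le_of_eq ?_) (h2.trans (by linarith))
    congr 1; ext y
    rw [hed]
    simp only [he]
    congr 2; ring
  have hL := rr_D heC ha hδ hda hDe
  set Q := ‖∫ y in (0:ℝ)..a, (rq a δ y : ℂ) * (e y - e a)‖ with hQ
  set γ := ‖g a‖ + ‖g (-a)‖ with hγd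
  have hγ2 : γ ^ 2 ≤ 2 * (a * R) := by
    rw [hγd]; nlinarith [sq_nonneg (‖g a‖ - ‖g (-a)‖)]
  have hγb : γ ≤ 3 / 2 * (b * r) := by
    apply le_of_sq_le_sq _ (by positivity)
    rw [mul_pow, mul_pow, hb2, hr2]; nlinarith
  have hea : ‖e a‖ ≤ γ := norm_add_le _ _
  have s4 : √(4 * R) = 2 * r := by
    rw [Real.sqrt_mul (by norm_num), show (4:ℝ) = 2 ^ 2 by norm_num, Real.sqrt_sq (by norm_num)]
  have s2 : √(2 * R) ≤ 3 / 2 * r := by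
    rw [Real.sqrt_le_left (by positivity), mul_pow, hr2]; nlinarith
  have sa : √(4 / a) = 2 / b := by
    rw [Real.sqrt_div (by norm_num), show (4:ℝ) = 2 ^ 2 by norm_num, Real.sqrt_sq (by norm_num)]
  rw [s4] at hL hE
  rw [sa] at hE
  have hQb : b * Q ≤ 14 * r := by
    have hb1 : b * Q ≤ b * (‖T‖ + 2 / b * (3 / 2 * r) + 2 * (3 / 2 * (b * r)) / a
        + 2 * (2 * r) / b) := by
      apply mul_le_mul_of_nonneg_left _ hb0.le
      refine hE.trans ?_
      have : ‖e a‖ ≤ 3 / 2 * (b * r) := hea.trans hγb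
      gcongr
    refine hb1.trans ?_
    have : b * (‖T‖ + 2 / b * (3 / 2 * r) + 2 * (3 / 2 * (b * r)) / a
        + 2 * (2 * r) / b) = b * ‖T‖ + 10 * r := by
      rw [← hb2]; field_simp; ring
    rw [this]; linarith
  have hLb : ‖e 0 - e a‖ ≤ 160 * (b * r) := by
    calc ‖e 0 - e a‖ ≤ 8 * a * Q + 24 * b * (2 * r) := hL
      _ = 8 * b * (b * Q) + 48 * (b * r) := by rw [← hb2]; ring
      _ ≤ 8 * b * (14 * r) + 48 * (b * r) := by gcongr
      _ = _ := by ring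
  have hL2 : ‖e 0 - e a‖ ^ 2 ≤ 25600 * (a * R) := by
    calc ‖e 0 - e a‖ ^ 2 ≤ (160 * (b * r)) ^ 2 := by gcongr
      _ = 25600 * (b ^ 2 * r ^ 2) := by ring
      _ = _ := by rw [hb2, hr2]
  have he0 : e 0 - e a = 2 * g 0 - g a - g (-a) := by simp only [he]; rw [neg_zero]; ring
  have key : ∀ x y : ℂ, e 0 - e a = 2 * g 0 - x - y → ‖x‖ + ‖y‖ = γ →
      ‖g 0 - x‖ ^ 2 ≤ 1 / 2 * ‖e 0 - e a‖ ^ 2 + 1 / 2 * γ ^ 2 := by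
    intro x y h1 h2
    have h3 : g 0 - x = 1 / 2 * ((e 0 - e a) + (y - x)) := by rw [h1]; ring
    have h4 : ‖y - x‖ ≤ γ := by rw [← h2, add_comm]; exact norm_sub_le _ _
    rw [h3, norm_mul, mul_pow]
    have h5 := rr_nsq (e 0 - e a) (y - x)
    have h6 : ‖y - x‖ ^ 2 ≤ γ ^ 2 := by gcongr
    have : ‖(1 / 2 : ℂ)‖ = 1 / 2 := by simp
    rw [this]; nlinarith
  have k1 := key (g a) (g (-a)) he0 rfl
  have k2 := key (g (-a)) (g a) (by rw [he0]; ring) (by rw [hγd]; ring)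
  linarith

noncomputable def rE (k : ℝ) (f : ℝ → ℂ) : ℝ :=
  (∫ y in (-1:ℝ)..1, ‖deriv f y‖ ^ 2) + k ^ 2 * ∫ y in (-1:ℝ)..1, ‖f y‖ ^ 2

theorem rE_nonneg (k : ℝ) (f : ℝ → ℂ) : 0 ≤ rE k f := by
  unfold rE
  have h1 : 0 ≤ ∫ y in (-1:ℝ)..1, ‖deriv f y‖ ^ 2 :=
    intervalIntegral.integral_nonneg (by norm_num) (fun t _ => sq_nonneg _)
  have h2 : 0 ≤ ∫ y in (-1:ℝ)..1, ‖f y‖ ^ 2 :=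
    intervalIntegral.integral_nonneg (by norm_num) (fun t _ => sq_nonneg _)
  positivity

noncomputable def rJ (k : ℝ) (f Φ : ℝ → ℂ) : ℂ :=
  ∫ y in (-1:ℝ)..1, (deriv f y * star (deriv Φ y) + (k : ℂ) ^ 2 * (f y * star (Φ y)))

theorem rJ_ibp {k : ℝ} {h Φ W : ℝ → ℂ} (hh : ContDiff ℝ 1 h) (h1 : h 1 = 0) (h2 : h (-1) = 0)
    (hΦ : ContDiff ℝ 2 Φ)
    (hO : ∀ y ∈ Set.Icc (-1:ℝ) 1, deriv (deriv Φ) y - (k : ℂ) ^ 2 * Φ y = W y) :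
    ∫ y in (-1:ℝ)..1, h y * star (W y) = - rJ k h Φ := by
  have hd1 : ContDiff ℝ 1 (deriv Φ) := hΦ.deriv'
  have c1 := hh.continuous
  have c2 : Continuous (deriv h) := hh.continuous_deriv le_rfl
  have c3 := hΦ.continuous
  have c4 := hd1.continuous
  have c5 : Continuous (deriv (deriv Φ)) := hd1.continuous_deriv le_rfl
  have e : ∫ y in (-1:ℝ)..1, (deriv h y * star (deriv Φ y) + h y * star (deriv (deriv Φ) y))
      = h 1 * star (deriv Φ 1) - h (-1) * star (deriv Φ (-1)) := by
    apply intervalIntegral.integral_eq_sub_of_hasDerivAt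
      (f := fun y => h y * star (deriv Φ y))
    · intro y _
      exact ((hh.differentiable (by norm_num)) y).hasDerivAt.mul
        ((hd1.differentiable (by norm_num)) y).hasDerivAt.star
    · exact Continuous.intervalIntegrable (by fun_prop) _ _
  rw [h1, h2, zero_mul, zero_mul, sub_zero] at e
  have e2 : ∫ y in (-1:ℝ)..1, h y * star (W y) =
    (∫ y in (-1:ℝ)..1, (deriv h y * star (deriv Φ y) + h y * star (deriv (deriv Φ) y)))
      - rJ k h Φ := by
    unfold rJ
    rw [← intervalIntegral.integral_sub (Continuous.intervalIntegrable (by fun_prop) _ _)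
      (Continuous.intervalIntegrable (by fun_prop) _ _)]
    apply intervalIntegral.integral_congr
    intro y hy
    rw [Set.uIcc_of_le (by norm_num)] at hy
    simp only
    rw [← hO y hy, star_sub, star_mul', star_pow]
    have : star (k : ℂ) = (k : ℂ) := Complex.conj_ofReal k
    rw [this]; ring
  rw [e2, e, zero_sub]

theorem rJ_self {k : ℝ} {Φ : ℝ → ℂ} (hΦ : ContDiff ℝ 1 Φ) : rJ k Φ Φ = (rE k Φ : ℂ) := by
  have c3 := hΦ.continuous
  have c4 : Continuous (deriv Φ) := hΦ.continuous_deriv le_rfl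
  unfold rJ rE
  rw [← intervalIntegral.integral_const_mul, ← intervalIntegral.integral_add
    (Continuous.intervalIntegrable (by fun_prop) _ _)
      (Continuous.intervalIntegrable (by fun_prop) _ _), ← intervalIntegral.integral_ofReal]
  congr 1; ext y
  have e : ∀ z : ℂ, z * star z = ((‖z‖ ^ 2 : ℝ) : ℂ) := by
    intro z
    have := Complex.mul_conj' z
    rw [Complex.ofReal_pow, ← this]; rfl
  rw [e, e]; push_cast; ring

theorem rr_cs2 {A B p1 p2 q1 q2 : ℝ} (hA : A ^ 2 ≤ p1 * q1) (hB : B ^ 2 ≤ p2 * q2)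
    (hp1 : 0 ≤ p1) (hp2 : 0 ≤ p2) (hq1 : 0 ≤ q1) (hq2 : 0 ≤ q2) :
    (A + B) ^ 2 ≤ (p1 + p2) * (q1 + q2) := by
  have h1 : A * B ≤ (p1 * q2 + p2 * q1) / 2 := by
    apply le_of_sq_le_sq _ (by positivity)
    calc (A * B) ^ 2 = A ^ 2 * B ^ 2 := by ring
      _ ≤ (p1 * q1) * (p2 * q2) := by gcongr
      _ ≤ _ := by nlinarith [sq_nonneg (p1 * q2 - p2 * q1)]
  nlinarith

theorem rJ_le {k : ℝ} {f Φ : ℝ → ℂ} (hf : ContDiff ℝ 1 f) (hΦ : ContDiff ℝ 1 Φ) :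
    ‖rJ k f Φ‖ ^ 2 ≤ rE k f * rE k Φ := by
  have c1 := hf.continuous
  have c2 : Continuous (deriv f) := hf.continuous_deriv le_rfl
  have c3 := hΦ.continuous
  have c4 : Continuous (deriv Φ) := hΦ.continuous_deriv le_rfl
  have hm : (-1:ℝ) ≤ 1 := by norm_num
  have h1 : ‖rJ k f Φ‖ ≤ (∫ y in (-1:ℝ)..1, ‖deriv f y‖ * ‖deriv Φ y‖)
      + ∫ y in (-1:ℝ)..1, (|k| * ‖f y‖) * (|k| * ‖Φ y‖) := by
    unfold rJ
    refine (intervalIntegral.norm_integral_le_integral_norm hm).trans ?_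
    rw [← intervalIntegral.integral_add
      (Continuous.intervalIntegrable (by fun_prop) _ _)
      (Continuous.intervalIntegrable (by fun_prop) _ _)]
    apply intervalIntegral.integral_mono_on hm
      (Continuous.intervalIntegrable (by fun_prop) _ _)
      (Continuous.intervalIntegrable (by fun_prop) _ _)
    intro y _
    refine (norm_add_le _ _).trans (le_of_eq ?_)
    rw [norm_mul, norm_mul, norm_mul, norm_pow, norm_star, norm_star, Complex.norm_real,
      Real.norm_eq_abs]; ring
  have h2 := rr_cs hm (p := fun y => ‖deriv f y‖) (r := fun y => ‖deriv Φ y‖)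
    (by fun_prop) (by fun_prop)
  have h3 := rr_cs hm (p := fun y => |k| * ‖f y‖) (r := fun y => |k| * ‖Φ y‖)
    (by fun_prop) (by fun_prop)
  simp only [mul_pow, sq_abs, intervalIntegral.integral_const_mul] at h3
  have n1 : ∀ u : ℝ → ℂ, 0 ≤ ∫ y in (-1:ℝ)..1, ‖u y‖ ^ 2 := fun u =>
    intervalIntegral.integral_nonneg hm (fun t _ => sq_nonneg _)
  have h4 := rr_cs2 h2 h3 (n1 _) (mul_nonneg (sq_nonneg k) (n1 f)) (n1 _)
    (mul_nonneg (sq_nonneg k) (n1 Φ))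
  exact (pow_le_pow_left₀ (norm_nonneg _) h1 2).trans h4

theorem rE_g {k : ℝ} {f Φ : ℝ → ℂ} (hf : ContDiff ℝ 1 f) (hΦ : ContDiff ℝ 1 Φ) :
    rE k (fun y => 2 * Φ y - f y) = 4 * rE k Φ - 4 * (rJ k f Φ).re + rE k f := by
  have c1 := hf.continuous
  have c2 : Continuous (deriv f) := hf.continuous_deriv le_rfl
  have c3 := hΦ.continuous
  have c4 : Continuous (deriv Φ) := hΦ.continuous_deriv le_rfl
  have hd : deriv (fun y => 2 * Φ y - f y) = fun y => 2 * deriv Φ y - deriv f y := by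
    ext y
    have h1 := ((hΦ.differentiable (by norm_num)) y).hasDerivAt
    have h2 := ((hf.differentiable (by norm_num)) y).hasDerivAt
    exact ((h1.const_mul 2).sub h2).deriv
  have e : ∀ z w : ℂ, ‖2 * z - w‖ ^ 2 = 4 * ‖z‖ ^ 2 - 4 * (w * star z).re + ‖w‖ ^ 2 := by
    intro z w
    rw [Complex.sq_norm, Complex.sq_norm, Complex.sq_norm, Complex.normSq_apply,
      Complex.normSq_apply, Complex.normSq_apply]
    simp
    ring
  have hre : (rJ k f Φ).re = (∫ y in (-1:ℝ)..1, (deriv f y * star (deriv Φ y)).re)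
      + k ^ 2 * ∫ y in (-1:ℝ)..1, (f y * star (Φ y)).re := by
    unfold rJ
    rw [← intervalIntegral.integral_const_mul, ← intervalIntegral.integral_add
      (Continuous.intervalIntegrable (by fun_prop) _ _)
      (Continuous.intervalIntegrable (by fun_prop) _ _)]
    have := (Complex.reCLM).intervalIntegral_comp_comm (μ := volume) (a := -1) (b := 1)
      (f := fun y => (deriv f y * star (deriv Φ y) + (k : ℂ) ^ 2 * (f y * star (Φ y))))
      (Continuous.intervalIntegrable (by fun_prop) _ _)
    simp only [Complex.reCLM_apply] at this
    rw [← this]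
    congr 1; ext y
    rw [Complex.add_re, ← Complex.ofReal_pow, Complex.re_ofReal_mul]
  have i1 : ∀ u : ℝ → ℂ, Continuous u → IntervalIntegrable (fun y => ‖u y‖ ^ 2) volume (-1) 1 :=
    fun u hu => Continuous.intervalIntegrable (by fun_prop) _ _
  have e3 : ∀ u v : ℝ → ℂ, Continuous u → Continuous v →
      ∫ y in (-1:ℝ)..1, ‖2 * u y - v y‖ ^ 2 = 4 * (∫ y in (-1:ℝ)..1, ‖u y‖ ^ 2)
        - 4 * (∫ y in (-1:ℝ)..1, (v y * star (u y)).re) + ∫ y in (-1:ℝ)..1, ‖v y‖ ^ 2 := by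
    intro u v hu hv
    simp only [e]
    rw [intervalIntegral.integral_add (Continuous.intervalIntegrable (by fun_prop) _ _)
      (i1 v hv), intervalIntegral.integral_sub (Continuous.intervalIntegrable (by fun_prop) _ _)
      (Continuous.intervalIntegrable (by fun_prop) _ _), intervalIntegral.integral_const_mul,
      intervalIntegral.integral_const_mul]
  unfold rE
  rw [hd, e3 _ _ c4 c2, e3 _ _ c3 c1, hre]
  ring

theorem rr_energy {k lam δ : ℝ} {f W Φ : ℝ → ℂ} (hf : ContDiff ℝ 1 f) (hf1 : f 1 = 0)
    (hf2 : f (-1) = 0) (hW : ContDiff ℝ 1 W) (hΦ : ContDiff ℝ 2 Φ)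
    (hQ : ∀ y ∈ Set.Icc (-1:ℝ) 1,
          ((1 : ℂ) - (y : ℂ) ^ 2 - (lam : ℂ) + Complex.I * (δ : ℂ)) * W y + 2 * Φ y = f y)
    (hO : ∀ y ∈ Set.Icc (-1:ℝ) 1, deriv (deriv Φ) y - (k : ℂ) ^ 2 * Φ y = W y)
    (h1 : Φ 1 = 0) (h2 : Φ (-1) = 0) :
    (∫ y in (-1:ℝ)..1, (1 - y ^ 2 - lam) * ‖W y‖ ^ 2) - 2 * rE k Φ = -(rJ k f Φ).re ∧
    δ * (∫ y in (-1:ℝ)..1, ‖W y‖ ^ 2) = -(rJ k f Φ).im := by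
  have c1 := hf.continuous
  have c2 := hW.continuous
  have c3 := hΦ.continuous
  have a1 := rJ_ibp hf hf1 hf2 hΦ hO
  have a2 := rJ_ibp (hΦ.of_le (by norm_num)) h1 h2 hΦ hO
  rw [rJ_self (hΦ.of_le (by norm_num))] at a2
  have e : ∀ z : ℂ, z * star z = ((‖z‖ ^ 2 : ℝ) : ℂ) := by
    intro z
    have := Complex.mul_conj' z
    rw [Complex.ofReal_pow, ← this]; rfl
  have e1 : ∫ y in (-1:ℝ)..1, f y * star (W y) =
      ((∫ y in (-1:ℝ)..1, (1 - y ^ 2 - lam) * ‖W y‖ ^ 2 : ℝ) : ℂ)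
      + Complex.I * ((δ * ∫ y in (-1:ℝ)..1, ‖W y‖ ^ 2 : ℝ) : ℂ)
      + 2 * ∫ y in (-1:ℝ)..1, Φ y * star (W y) := by
    rw [← intervalIntegral.integral_const_mul, ← intervalIntegral.integral_ofReal,
      ← intervalIntegral.integral_ofReal, ← intervalIntegral.integral_const_mul,
      ← intervalIntegral.integral_const_mul,
      ← intervalIntegral.integral_add (Continuous.intervalIntegrable (by fun_prop) _ _)
      (Continuous.intervalIntegrable (by fun_prop) _ _),
      ← intervalIntegral.integral_add (Continuous.intervalIntegrable (by fun_prop) _ _)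
      (Continuous.intervalIntegrable (by fun_prop) _ _)]
    apply intervalIntegral.integral_congr
    intro y hy
    rw [Set.uIcc_of_le (by norm_num)] at hy
    simp only
    rw [← hQ y hy]
    have := e (W y)
    push_cast at this ⊢
    rw [← this]; ring
  rw [a1, a2] at e1
  constructor
  · have := congrArg Complex.re e1
    simp at this
    linarith
  · have := congrArg Complex.im e1
    simp at this
    linarith

theorem rr_split {u : ℝ → ℝ} (hu : Continuous u) :
    ∫ y in (-1:ℝ)..1, u y = (∫ y in (0:ℝ)..1, u y) + ∫ y in (0:ℝ)..1, u (-y) := by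
  rw [intervalIntegral.integral_comp_neg (fun y => u y), neg_zero, add_comm,
    intervalIntegral.integral_add_adjacent_intervals (hu.intervalIntegrable _ _)
      (hu.intervalIntegrable _ _)]

theorem rr_g0 {g : ℝ → ℂ} (hg : ContDiff ℝ 1 g) (h1 : g 1 = 0) :
    (‖g 0‖ ^ 2) ^ 2 ≤ 4 * ((∫ y in (0:ℝ)..1, ‖g y‖ ^ 2) * ∫ y in (0:ℝ)..1, ‖deriv g y‖ ^ 2) := by
  have c1 := hg.continuous
  have c2 : Continuous (deriv g) := hg.continuous_deriv le_rfl
  have ci : Continuous (fun y => (2 * inner ℝ (g y) (deriv g y) : ℝ)) := by fun_prop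
  have e : ∫ y in (0:ℝ)..1, (2 * inner ℝ (g y) (deriv g y) : ℝ) = ‖g 1‖ ^ 2 - ‖g 0‖ ^ 2 := by
    apply intervalIntegral.integral_eq_sub_of_hasDerivAt (f := fun y => ‖g y‖ ^ 2)
    · intro y _
      exact ((hg.differentiable (by norm_num)) y).hasDerivAt.norm_sq
    · exact ci.intervalIntegrable _ _
  rw [h1] at e
  have h2 : ‖g 0‖ ^ 2 ≤ 2 * ∫ y in (0:ℝ)..1, ‖g y‖ * ‖deriv g y‖ := by
    have h3 : ∫ y in (0:ℝ)..1, -(2 * inner ℝ (g y) (deriv g y) : ℝ) = ‖g 0‖ ^ 2 := by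
      rw [intervalIntegral.integral_neg, e]; simp
    rw [← h3, ← intervalIntegral.integral_const_mul]
    apply intervalIntegral.integral_mono_on zero_le_one (ci.neg.intervalIntegrable _ _)
      (Continuous.intervalIntegrable (by fun_prop) _ _)
    intro y _
    have := neg_le_of_abs_le (abs_real_inner_le_norm (g y) (deriv g y))
    show -(2 * inner ℝ (g y) (deriv g y)) ≤ 2 * (‖g y‖ * ‖deriv g y‖)
    linarith
  have h3 := rr_cs zero_le_one (p := fun y => ‖g y‖) (r := fun y => ‖deriv g y‖)
    (by fun_prop) (by fun_prop)
  calc (‖g 0‖ ^ 2) ^ 2 ≤ _ := pow_le_pow_left₀ (by positivity) h2 2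
    _ ≤ _ := by rw [mul_pow]; linarith

theorem rr_half {g : ℝ → ℂ} (hg : ContDiff ℝ 1 g) (h1 : g 1 = 0) {a δ M K : ℝ} (ha : 0 < a)
    (ha1 : a ≤ 1) (hδ : 0 < δ) (hM : 1 ≤ M) (hMd : M * δ ≤ a ^ 2)
    (hK : ∫ y in (0:ℝ)..1, ‖deriv g y‖ ^ 2 ≤ K) :
    (∫ y in (0:ℝ)..1, rq a δ y * ‖g y‖ ^ 2 ≤ ((∫ y in (0:ℝ)..a, ‖deriv g y‖ ^ 2)
        - (∫ y in (0:ℝ)..a, ‖deriv g y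
          + ((2 * y / (a ^ 2 + δ - y ^ 2) : ℝ) : ℂ) * (g y - g a)‖ ^ 2)) / 2
        + 2 * (∫ y in (0:ℝ)..1, rd a δ y * ‖g y‖ ^ 2)
        + 9 * (‖g a‖ ^ 2 / a) + 8 * (√(‖g a‖ ^ 2 / a) * √K)) ∧
    (∫ y in (0:ℝ)..a, ‖deriv g y‖ ^ 2) ≤ 4 * (∫ y in (0:ℝ)..a, ‖deriv g y
          + ((2 * y / (a ^ 2 + δ - y ^ 2) : ℝ) : ℂ) * (g y - g a)‖ ^ 2)
        + 3 * (‖g 0 - g a‖ ^ 2 / a) ∧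
    ‖g a‖ ^ 2 / a ≤ 10 * (∫ y in (0:ℝ)..1, rd a δ y * ‖g y‖ ^ 2)
      + 2 / M * ∫ y in (0:ℝ)..a, ‖deriv g y‖ ^ 2 := by
  have c1 := hg.continuous
  have hdc := rd_cont (a := a) hδ
  have hX : ∫ y in (0:ℝ)..a, rd a δ y * ‖g y‖ ^ 2 ≤ ∫ y in (0:ℝ)..1, rd a δ y * ‖g y‖ ^ 2 :=
    rr_mono (by fun_prop) (fun t => mul_nonneg (rd_nonneg hδ t) (sq_nonneg _)) le_rfl ha.le ha1
  have hda : δ ≤ a ^ 2 := by nlinarith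
  have hA := rr_A hg ha hδ hda
  have hB := rr_B hg h1 ha ha1 hδ hK
  obtain ⟨hC1, hC2⟩ := rr_C hg ha le_rfl hδ
  have hKi : 0 ≤ ∫ y in (0:ℝ)..a, ‖deriv g y‖ ^ 2 :=
    intervalIntegral.integral_nonneg ha.le (fun t _ => sq_nonneg _)
  refine ⟨?_, ?_, ?_⟩
  · have e : ‖g a‖ * √K / √a = √(‖g a‖ ^ 2 / a) * √K := by
      rw [Real.sqrt_div (sq_nonneg _), Real.sqrt_sq (norm_nonneg _)]; ring
    rw [e] at hB
    linarith
  · linarith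
  · have e : ‖g a‖ ^ 2 / a ≤ 10 * (∫ y in (0:ℝ)..a, rd a δ y * ‖g y‖ ^ 2)
      + 2 * (δ / a ^ 2) * ∫ y in (0:ℝ)..a, ‖deriv g y‖ ^ 2 := by
      rw [div_le_iff₀ ha]
      refine hA.trans (le_of_eq ?_)
      field_simp
    have e2 : 2 * (δ / a ^ 2) ≤ 2 / M := by
      rw [mul_div_assoc', div_le_div_iff₀ (by positivity) (by linarith)]; linarith
    have := mul_le_mul_of_nonneg_right e2 hKi
    linarith

theorem rr_half2 {g : ℝ → ℂ} (hg : ContDiff ℝ 1 g) (h1 : g 1 = 0) {a δ : ℝ}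
    (ha1 : 1 ≤ a) (hδ : 0 < δ) :
    ∃ D : ℝ, 0 ≤ D ∧ (∫ y in (0:ℝ)..1, rq a δ y * ‖g y‖ ^ 2
      ≤ ((∫ y in (0:ℝ)..1, ‖deriv g y‖ ^ 2) - D) / 2
        + (∫ y in (0:ℝ)..1, rd a δ y * ‖g y‖ ^ 2)) ∧
    (∫ y in (0:ℝ)..1, ‖deriv g y‖ ^ 2) ≤ 4 * D + 3 * (‖g 0‖ ^ 2 / a) := by
  have c1 := hg.continuous
  have hdc := rd_cont (a := a) hδ
  have hqc := rq_cont (a := a) hδ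
  obtain ⟨hC1, hC2⟩ := rr_C hg zero_lt_one ha1 hδ
  rw [h1] at hC1 hC2
  simp only [sub_zero] at hC1 hC2
  refine ⟨∫ y in (0:ℝ)..1, ‖deriv g y + ((2 * y / (a ^ 2 + δ - y ^ 2) : ℝ) : ℂ) * g y‖ ^ 2,
    intervalIntegral.integral_nonneg zero_le_one (fun t _ => sq_nonneg _), ?_, ?_⟩
  · have i1 : IntervalIntegrable (fun y => ‖g y‖ ^ 2 / (a ^ 2 + δ - y ^ 2)) volume 0 1 := by
      apply ContinuousOn.intervalIntegrable_of_Icc zero_le_one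
      apply ContinuousOn.div (by fun_prop) (by fun_prop)
      intro y hy; have := hy.1; have := hy.2; nlinarith
    have i2 : IntervalIntegrable (fun y => rd a δ y * ‖g y‖ ^ 2) volume 0 1 :=
      Continuous.intervalIntegrable (by fun_prop) _ _
    have : ∫ y in (0:ℝ)..1, rq a δ y * ‖g y‖ ^ 2 ≤
        (∫ y in (0:ℝ)..1, ‖g y‖ ^ 2 / (a ^ 2 + δ - y ^ 2))
          + ∫ y in (0:ℝ)..1, rd a δ y * ‖g y‖ ^ 2 := by
      rw [← intervalIntegral.integral_add i1 i2]
      apply intervalIntegral.integral_mono_on zero_le_one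
        (Continuous.intervalIntegrable (by fun_prop) _ _) (i1.add i2)
      intro y hy
      have := mul_le_mul_of_nonneg_right (rq_le hδ hy.1 (hy.2.trans ha1)) (sq_nonneg ‖g y‖)
      refine this.trans (le_of_eq ?_)
      ring
    linarith
  · linarith

set_option maxHeartbeats 2000000 in
theorem rr_main {g f Φ W : ℝ → ℂ} (hg : ContDiff ℝ 1 g) (hf : ContDiff ℝ 1 f)
    (hΦ : ContDiff ℝ 2 Φ) (h1 : g 1 = 0) (h2 : g (-1) = 0) {k a δ M B : ℝ}
    (hgd : ∀ y, g y = 2 * Φ y - f y) (hk : 1 ≤ k) (ha : 0 < a) (hδ : 0 < δ) (hM : 1 ≤ M)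
    (hMd : M * δ ≤ a ^ 2)
    (hW : ∀ y ∈ Set.Icc (-1:ℝ) 1, W y = -(((rq a δ y : ℂ) - Complex.I * (rd a δ y : ℂ)) * g y))
    (hO : ∀ y ∈ Set.Icc (-1:ℝ) 1, deriv (deriv Φ) y - (k : ℂ) ^ 2 * Φ y = W y)
    (hFB : rE k f ≤ B) (hXB : ∫ y in (-1:ℝ)..1, rd a δ y * ‖g y‖ ^ 2 ≤ B)
    (hH : 1 / 2 * rE k g ≤ (∫ y in (-1:ℝ)..1, rq a δ y * ‖g y‖ ^ 2) + B) :
    ∃ Γ : ℝ, 0 ≤ Γ ∧ Γ ≤ 10 * B + 2 / M * rE k g ∧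
      rE k g ≤ 80000 * (3 * B + 9 * Γ + 16 * (√Γ * √(rE k g))) := by
  have cg := hg.continuous
  have cgd : Continuous (deriv g) := hg.continuous_deriv le_rfl
  have cf := hf.continuous
  have cfd : Continuous (deriv f) := hf.continuous_deriv le_rfl
  have cP := hΦ.continuous
  have cPd : Continuous (deriv Φ) := hΦ.continuous_deriv (by norm_num)
  have hdc := rd_cont (a := a) hδ
  have hqc := rq_cont (a := a) hδ
  have hF0 := rE_nonneg k f
  have hH0 := rE_nonneg k g
  have hB0 : 0 ≤ B := hF0.trans hFB
  have hgr := rr_refl hg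
  have hgr1 : (fun y => g (-y)) 1 = 0 := h2
  set H := rE k g with hHd
  have nn : ∀ (u : ℝ → ℂ) (x y : ℝ), x ≤ y → 0 ≤ ∫ t in x..y, ‖u t‖ ^ 2 := fun u x y h =>
    intervalIntegral.integral_nonneg h (fun t _ => sq_nonneg _)
  -- split of H, X, and the rq integral
  have sK := rr_split (u := fun y => ‖deriv g y‖ ^ 2) (by fun_prop)
  have sN := rr_split (u := fun y => ‖g y‖ ^ 2) (by fun_prop)
  have sX := rr_split (u := fun y => rd a δ y * ‖g y‖ ^ 2) (by fun_prop)
  have sQ := rr_split (u := fun y => rq a δ y * ‖g y‖ ^ 2) (by fun_prop)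
  have q1 : ∀ y, rq a δ (-y) = rq a δ y := fun y => by simp [rq]
  have q2 : ∀ y, rd a δ (-y) = rd a δ y := fun y => by simp [rd]
  simp only [q1, q2] at sX sQ
  have sKn : ∫ y in (0:ℝ)..1, ‖deriv g (-y)‖ ^ 2 = ∫ y in (0:ℝ)..1, ‖-deriv g (-y)‖ ^ 2 := by
    simp
  rw [sKn] at sK
  set Kp := ∫ y in (0:ℝ)..1, ‖deriv g y‖ ^ 2 with hKp
  set Km := ∫ y in (0:ℝ)..1, ‖-deriv g (-y)‖ ^ 2 with hKm
  set Np := ∫ y in (0:ℝ)..1, ‖g y‖ ^ 2 with hNp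
  set Nm := ∫ y in (0:ℝ)..1, ‖g (-y)‖ ^ 2 with hNm
  set Xp := ∫ y in (0:ℝ)..1, rd a δ y * ‖g y‖ ^ 2 with hXp
  set Xm := ∫ y in (0:ℝ)..1, rd a δ y * ‖g (-y)‖ ^ 2 with hXm
  set Qp := ∫ y in (0:ℝ)..1, rq a δ y * ‖g y‖ ^ 2 with hQp
  set Qm := ∫ y in (0:ℝ)..1, rq a δ y * ‖g (-y)‖ ^ 2 with hQm
  have hHe : H = Kp + Km + k ^ 2 * (Np + Nm) := by rw [hHd]; unfold rE; rw [sK, sN]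
  rw [sX] at hXB
  rw [sQ] at hH
  have hKp0 : 0 ≤ Kp := nn _ _ _ zero_le_one
  have hKm0 : 0 ≤ Km := nn (fun y => -deriv g (-y)) _ _ zero_le_one
  have hNp0 : 0 ≤ Np := nn _ _ _ zero_le_one
  have hNm0 : 0 ≤ Nm := nn (fun y => g (-y)) _ _ zero_le_one
  have hXp0 : 0 ≤ Xp := intervalIntegral.integral_nonneg zero_le_one
    (fun t _ => mul_nonneg (rd_nonneg hδ t) (sq_nonneg _))
  have hXm0 : 0 ≤ Xm := intervalIntegral.integral_nonneg zero_le_one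
    (fun t _ => mul_nonneg (rd_nonneg hδ t) (sq_nonneg _))
  set N := k ^ 2 * (Np + Nm) with hN
  have hN0 : 0 ≤ N := by positivity
  -- bound of g 0 when k a is not small
  have ht : 1 / 2 ≤ k * a → ‖g 0‖ ^ 2 / a ≤ H / 48 + 192 * N := by
    intro hka
    have t1 := rr_g0 hg h1
    rw [← hKp, ← hNp] at t1
    apply le_of_sq_le_sq _ (by positivity)
    have hka2 : 1 / 4 ≤ (k * a) ^ 2 := by nlinarith
    rw [div_pow, div_le_iff₀ (by positivity)]
    calc (‖g 0‖ ^ 2) ^ 2 ≤ 4 * (Np * Kp) := t1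
      _ = 1 / 4 * (16 * (Np * Kp)) := by ring
      _ ≤ (k * a) ^ 2 * (16 * (Np * Kp)) := by gcongr
      _ = 16 * ((k ^ 2 * Np) * Kp) * a ^ 2 := by ring
      _ ≤ 16 * (N * H) * a ^ 2 := by
          have : k ^ 2 * Np ≤ N := by rw [hN]; nlinarith [sq_nonneg k]
          have : Kp ≤ H := by linarith
          gcongr
      _ ≤ (H / 48 + 192 * N) ^ 2 * a ^ 2 := by
          gcongr
          nlinarith [sq_nonneg (H / 48 - 192 * N)]
  rcases le_or_gt a 1 with ha1 | ha1
  · -- a ≤ 1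
    set Γ := ‖g a‖ ^ 2 / a + ‖g (-a)‖ ^ 2 / a with hΓ
    have g1 : 0 ≤ ‖g a‖ ^ 2 / a := by positivity
    have g2 : 0 ≤ ‖g (-a)‖ ^ 2 / a := by positivity
    have hΓ0 : 0 ≤ Γ := by positivity
    obtain ⟨A1, A2, A3⟩ := rr_half hg h1 ha ha1 hδ hM hMd (K := H) (by linarith)
    obtain ⟨B1, B2, B3⟩ := rr_half hgr hgr1 ha ha1 hδ hM hMd (K := H) (by
      rw [rr_refl_d]; linarith)
    rw [rr_refl_d] at B1 B2 B3
    simp only [neg_zero] at B1 B2 B3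
    set Dp := ∫ y in (0:ℝ)..a, ‖deriv g y
        + ((2 * y / (a ^ 2 + δ - y ^ 2) : ℝ) : ℂ) * (g y - g a)‖ ^ 2 with hDp
    set Dm := ∫ y in (0:ℝ)..a, ‖-deriv g (-y)
        + ((2 * y / (a ^ 2 + δ - y ^ 2) : ℝ) : ℂ) * (g (-y) - g (-a))‖ ^ 2 with hDm
    set Kpi := ∫ y in (0:ℝ)..a, ‖deriv g y‖ ^ 2 with hKpi
    set Kmi := ∫ y in (0:ℝ)..a, ‖-deriv g (-y)‖ ^ 2 with hKmi
    have sp : Kpi + ∫ y in a..1, ‖deriv g y‖ ^ 2 = Kp :=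
      intervalIntegral.integral_add_adjacent_intervals
        (Continuous.intervalIntegrable (by fun_prop) _ _)
        (Continuous.intervalIntegrable (by fun_prop) _ _)
    have sm : Kmi + ∫ y in a..1, ‖-deriv g (-y)‖ ^ 2 = Km :=
      intervalIntegral.integral_add_adjacent_intervals
        (Continuous.intervalIntegrable (by fun_prop) _ _)
        (Continuous.intervalIntegrable (by fun_prop) _ _)
    set Kpo := ∫ y in a..1, ‖deriv g y‖ ^ 2 with hKpo
    set Kmo := ∫ y in a..1, ‖-deriv g (-y)‖ ^ 2 with hKmo
    have hKpo0 : 0 ≤ Kpo := nn _ _ _ ha1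
    have hKmo0 : 0 ≤ Kmo := nn (fun y => -deriv g (-y)) _ _ ha1
    have hDp0 : 0 ≤ Dp := intervalIntegral.integral_nonneg ha.le (fun t _ => sq_nonneg _)
    have hDm0 : 0 ≤ Dm := intervalIntegral.integral_nonneg ha.le (fun t _ => sq_nonneg _)
    have hr1 : √(‖g a‖ ^ 2 / a) * √H ≤ √Γ * √H := by
      gcongr; linarith
    have hr2 : √(‖g (-a)‖ ^ 2 / a) * √H ≤ √Γ * √H := by
      gcongr; linarith
    refine ⟨Γ, hΓ0, ?_, ?_⟩
    · have : 2 / M * (Kpi + Kmi) ≤ 2 / M * H := by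
        gcongr; linarith
      rw [mul_add] at this
      linarith
    set R := 3 * B + 9 * Γ + 16 * (√Γ * √H) with hR
    have hsq : 0 ≤ √Γ * √H := by positivity
    have hmain : Kpo + Kmo + Dp + Dm + N ≤ 2 * R := by linarith
    have hBR : 3 * B ≤ R := by linarith
    have hΓR : 9 * Γ ≤ R := by linarith
    rcases le_or_gt (1 / 2) (k * a) with hka | hka
    · have t := ht hka
      have u1 : ‖g 0 - g a‖ ^ 2 / a ≤ 2 * (‖g 0‖ ^ 2 / a) + 2 * (‖g a‖ ^ 2 / a) := by
        rw [mul_div_assoc', mul_div_assoc', ← add_div]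
        gcongr
        have := rr_nsq (g 0) (-g a)
        rw [norm_neg, ← sub_eq_add_neg] at this
        linarith
      have u2 : ‖g 0 - g (-a)‖ ^ 2 / a ≤ 2 * (‖g 0‖ ^ 2 / a) + 2 * (‖g (-a)‖ ^ 2 / a) := by
        rw [mul_div_assoc', mul_div_assoc', ← add_div]
        gcongr
        have := rr_nsq (g 0) (-g (-a))
        rw [norm_neg, ← sub_eq_add_neg] at this
        linarith
      linarith
    · have hka' : 2 * a ≤ 1 := by nlinarith
      have hgdd : ∀ y, deriv Φ y = (1 / 2 : ℂ) * (deriv g y + deriv f y) := by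
        intro y
        have e1 : g = fun y => 2 * Φ y - f y := funext hgd
        have e2 : deriv g y = 2 * deriv Φ y - deriv f y := by
          rw [e1]
          have h1 := ((hΦ.differentiable (by norm_num)) y).hasDerivAt
          have h2 := ((hf.differentiable (by norm_num)) y).hasDerivAt
          exact ((h1.const_mul 2).sub h2).deriv
        rw [e2]; ring
      have hgdd' : ∀ y, Φ y = (1 / 2 : ℂ) * (g y + f y) := by
        intro y; rw [hgd]; ring
      have half : ∀ u v : ℝ → ℂ, ∀ x y : ℝ, x ≤ y → Continuous u → Continuous v →
          ∫ t in x..y, ‖(1 / 2 : ℂ) * (u t + v t)‖ ^ 2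
          ≤ 1 / 2 * ((∫ t in x..y, ‖u t‖ ^ 2) + ∫ t in x..y, ‖v t‖ ^ 2) := by
        intro u v x y h hu hv
        have := rr_par1 h hu.continuousOn hv.continuousOn
        have e : ∀ t, ‖(1 / 2 : ℂ) * (u t + v t)‖ ^ 2 = 1 / 4 * ‖u t + v t‖ ^ 2 := by
          intro t; rw [norm_mul, mul_pow]; congr 1; simp; norm_num
        simp only [e, intervalIntegral.integral_const_mul]
        linarith
      have sf := rr_split (u := fun y => ‖deriv f y‖ ^ 2) (by fun_prop)
      have sf2 := rr_split (u := fun y => ‖f y‖ ^ 2) (by fun_prop)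
      have hF : rE k f = (∫ y in (-1:ℝ)..1, ‖deriv f y‖ ^ 2)
        + k ^ 2 * ∫ y in (-1:ℝ)..1, ‖f y‖ ^ 2 := rfl
      rw [sf, sf2] at hF
      have f1 := rr_mono (x := 0) (y := 1) (z := a) (w := 1) (u := fun y => ‖deriv f y‖ ^ 2)
        (by fun_prop) (fun t => sq_nonneg _) ha.le ha1 le_rfl
      have f2 := rr_mono (x := 0) (y := 1) (z := a) (w := 1) (u := fun y => ‖deriv f (-y)‖ ^ 2)
        (by fun_prop) (fun t => sq_nonneg _) ha.le ha1 le_rfl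
      have f3 : 0 ≤ ∫ y in a..1, ‖deriv f y‖ ^ 2 := nn _ _ _ ha1
      have f4 : 0 ≤ ∫ y in a..1, ‖deriv f (-y)‖ ^ 2 := nn (fun y => deriv f (-y)) _ _ ha1
      have f5 : 0 ≤ ∫ y in (0:ℝ)..1, ‖f y‖ ^ 2 := nn _ _ _ zero_le_one
      have f6 : 0 ≤ ∫ y in (0:ℝ)..1, ‖f (-y)‖ ^ 2 := nn (fun y => f (-y)) _ _ zero_le_one
      have f7 : 0 ≤ k ^ 2 * ((∫ y in (0:ℝ)..1, ‖f y‖ ^ 2) + ∫ y in (0:ℝ)..1, ‖f (-y)‖ ^ 2) := by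
        positivity
      have hPo : (∫ y in a..1, ‖deriv Φ y‖ ^ 2) + (∫ y in a..1, ‖-deriv Φ (-y)‖ ^ 2)
          ≤ 2 * R := by
        simp only [norm_neg, hgdd]
        have k1 := half (deriv g) (deriv f) a 1 ha1 cgd cfd
        have k2 := half (fun y => deriv g (-y)) (fun y => deriv f (-y)) a 1 ha1
          (by fun_prop) (by fun_prop)
        simp only [norm_neg] at hKmo
        rw [← hKpo] at k1
        rw [← hKmo] at k2
        linarith
      have hPk : k ^ 2 * ((∫ y in (0:ℝ)..1, ‖Φ y‖ ^ 2) + (∫ y in (0:ℝ)..1, ‖Φ (-y)‖ ^ 2))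
          ≤ 2 * R := by
        simp only [hgdd']
        have k1 := half g f 0 1 zero_le_one cg cf
        have k2 := half (fun y => g (-y)) (fun y => f (-y)) 0 1 zero_le_one
          (by fun_prop) (by fun_prop)
        have k3 := mul_le_mul_of_nonneg_left (add_le_add k1 k2) (sq_nonneg k)
        refine k3.trans ?_
        rw [← hNp, ← hNm]
        have f8 : 0 ≤ ∫ y in (0:ℝ)..1, ‖deriv f y‖ ^ 2 := nn _ _ _ zero_le_one
        have f9 : 0 ≤ ∫ y in (0:ℝ)..1, ‖deriv f (-y)‖ ^ 2 :=
          nn (fun y => deriv f (-y)) _ _ zero_le_one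
        have e : ∀ p q r s : ℝ, k ^ 2 * (1 / 2 * (p + q) + 1 / 2 * (r + s))
          = 1 / 2 * (k ^ 2 * (p + r)) + 1 / 2 * (k ^ 2 * (q + s)) := by intros; ring
        rw [e]
        linarith
      have hbb := rr_b hg hΦ ha hka' (by linarith) hka.le hδ (by nlinarith) hW hO
        (R := R) (by linarith) (by linarith) (by linarith) (by
          have : ‖g a‖ ^ 2 + ‖g (-a)‖ ^ 2 = a * Γ := by rw [hΓ]; field_simp
          rw [this]; gcongr; linarith) hPo hPk
      have hbb2 : ‖g 0 - g a‖ ^ 2 / a + ‖g 0 - g (-a)‖ ^ 2 / a ≤ 26000 * R := by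
        rw [← add_div, div_le_iff₀ ha]; linarith
      linarith
  · -- a ≥ 1
    refine ⟨0, le_rfl, by positivity, ?_⟩
    simp only [Real.sqrt_zero, zero_mul, mul_zero, add_zero]
    obtain ⟨Dp, Dp0, A1, A2⟩ := rr_half2 hg h1 ha1.le hδ
    obtain ⟨Dm, Dm0, B1, B2⟩ := rr_half2 hgr hgr1 ha1.le hδ
    rw [rr_refl_d] at B1 B2
    simp only [neg_zero] at B1 B2
    have t := ht (by nlinarith)
    linarith

theorem rr_alg {h F e Γ : ℝ} (h0 : 0 ≤ h) (F0 : 0 ≤ F) (Γ0 : 0 ≤ Γ)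
    (hh : 2 * e ≤ h + F)
    (hΓ : Γ ≤ 10 * (F ^ 2 + F * h) + 2 / 10 ^ 14 * h ^ 2)
    (hm : h ^ 2 ≤ 80000 * (3 * (F ^ 2 + F * h) + 9 * Γ + 16 * (√Γ * h))) :
    e ≤ 10 ^ 14 * F := by
  have hG := Real.sq_sqrt Γ0
  set G := √Γ
  have y1 : 80000 * (16 * (G * h)) ≤ h ^ 2 / 4 + 1280000 ^ 2 * Γ := by
    rw [← hG]; nlinarith [sq_nonneg (h / 2 - 1280000 * G)]
  have y2 : h ^ 2 ≤ 3 * 10 ^ 13 * (F ^ 2 + F * h) := by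
    have : 0 ≤ F * h := by positivity
    have := sq_nonneg F
    have := sq_nonneg h
    norm_num at hΓ hm y1 ⊢
    linarith
  have y3 : h ^ 2 ≤ (10 ^ 14 * F) ^ 2 := by
    nlinarith [sq_nonneg (h - 3 * 10 ^ 13 * F), sq_nonneg F]
  have y4 : h ≤ 10 ^ 14 * F := by
    rwa [pow_le_pow_iff_left₀ h0 (by positivity) two_ne_zero] at y3
  linarith

theorem rr_sqle {x y : ℝ} (hx : 0 ≤ x) (hy : 0 ≤ y) (h : x ^ 2 ≤ y ^ 2) : x ≤ y := by
  rwa [pow_le_pow_iff_left₀ hx hy two_ne_zero] at h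

set_option maxHeartbeats 1000000 in
theorem rr_core {k lam δ : ℝ} {f W Φ : ℝ → ℂ} (hf : ContDiff ℝ 1 f) (hf1 : f 1 = 0)
    (hf2 : f (-1) = 0) (hW : ContDiff ℝ 1 W) (hΦ : ContDiff ℝ 2 Φ) (hk : 1 ≤ k) (hδ : 0 < δ)
    (hQ : ∀ y ∈ Set.Icc (-1:ℝ) 1,
          ((1 : ℂ) - (y : ℂ) ^ 2 - (lam : ℂ) + Complex.I * (δ : ℂ)) * W y + 2 * Φ y = f y)
    (hO : ∀ y ∈ Set.Icc (-1:ℝ) 1, deriv (deriv Φ) y - (k : ℂ) ^ 2 * Φ y = W y)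
    (h1 : Φ 1 = 0) (h2 : Φ (-1) = 0) :
    √(rE k Φ) ≤ 10 ^ 14 * √(rE k f) := by
  obtain ⟨e1, e2⟩ := rr_energy hf hf1 hf2 hW hΦ hQ hO h1 h2
  have cW := hW.continuous
  have hΦ1 : ContDiff ℝ 1 Φ := hΦ.of_le (by norm_num)
  have hJ := rJ_le (k := k) hf hΦ1
  have hg2 := rE_g (k := k) hf hΦ1
  have F2 := Real.sq_sqrt (rE_nonneg k f)
  have E2 := Real.sq_sqrt (rE_nonneg k Φ)
  have F0 := Real.sqrt_nonneg (rE k f)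
  have E0 := Real.sqrt_nonneg (rE k Φ)
  set F := √(rE k f)
  set e := √(rE k Φ)
  have hJ' : ‖rJ k f Φ‖ ≤ F * e := by
    apply rr_sqle (norm_nonneg _) (by positivity)
    rw [mul_pow, F2, E2]; exact hJ
  have hre := abs_le.1 ((Complex.abs_re_le_norm (rJ k f Φ)).trans hJ')
  have him := abs_le.1 ((Complex.abs_im_le_norm (rJ k f Φ)).trans hJ')
  have hN0 : 0 ≤ ∫ y in (-1:ℝ)..1, ‖W y‖ ^ 2 :=
    intervalIntegral.integral_nonneg (by norm_num) (fun t _ => sq_nonneg _)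
  rcases le_or_gt (1 - lam) (10 ^ 14 * δ) with hc | hc
  · have : (∫ y in (-1:ℝ)..1, (1 - y ^ 2 - lam) * ‖W y‖ ^ 2)
        ≤ 10 ^ 14 * (δ * ∫ y in (-1:ℝ)..1, ‖W y‖ ^ 2) := by
      rw [← mul_assoc, ← intervalIntegral.integral_const_mul]
      apply intervalIntegral.integral_mono_on (by norm_num)
        (Continuous.intervalIntegrable (by fun_prop) _ _)
        (Continuous.intervalIntegrable (by fun_prop) _ _)
      intro y _
      apply mul_le_mul_of_nonneg_right _ (sq_nonneg _)
      nlinarith [sq_nonneg y]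
    rw [e2] at this
    have h3 : 2 * e ^ 2 ≤ (10 ^ 14 + 1) * (F * e) := by
      rw [E2]; linarith
    by_contra hcon
    push Not at hcon
    have : 0 < e := lt_of_le_of_lt (by positivity) hcon
    nlinarith
  · have ha2 : 0 < 1 - lam := lt_trans (by positivity) hc
    set a := √(1 - lam) with ha
    have ha0 : 0 < a := Real.sqrt_pos.2 ha2
    have haa : a ^ 2 = 1 - lam := Real.sq_sqrt ha2.le
    set g : ℝ → ℂ := fun y => 2 * Φ y - f y with hg
    have hgc : ContDiff ℝ 1 g := by
      exact (contDiff_const.mul hΦ1).sub hf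
    have hgW : ∀ y ∈ Set.Icc (-1:ℝ) 1,
        g y = -((((a ^ 2 - y ^ 2 : ℝ) : ℂ) + Complex.I * (δ : ℂ)) * W y) := by
      intro y hy
      have := hQ y hy
      rw [haa, hg]
      push_cast
      linear_combination this
    have hden : ∀ y : ℝ, 0 < (a ^ 2 - y ^ 2) ^ 2 + δ ^ 2 := fun y => by positivity
    have hgn : ∀ y ∈ Set.Icc (-1:ℝ) 1,
        ‖g y‖ ^ 2 = ((a ^ 2 - y ^ 2) ^ 2 + δ ^ 2) * ‖W y‖ ^ 2 := by
      intro y hy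
      rw [hgW y hy, norm_neg, norm_mul, mul_pow]
      congr 1
      rw [Complex.sq_norm, mul_comm Complex.I, Complex.normSq_add_mul_I]
    have hWg : ∀ y ∈ Set.Icc (-1:ℝ) 1,
        W y = -(((rq a δ y : ℂ) - Complex.I * (rd a δ y : ℂ)) * g y) := by
      intro y hy
      rw [hgW y hy]
      have hd : ((((a ^ 2 - y ^ 2) ^ 2 + δ ^ 2 : ℝ)) : ℂ) ≠ 0 := by
        exact_mod_cast (hden y).ne'
      unfold rq rd
      rw [Complex.ofReal_div, Complex.ofReal_div]
      field_simp
      push_cast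
      ring_nf
      simp only [Complex.I_sq]
      ring
    have u1 : ∫ y in (-1:ℝ)..1, rd a δ y * ‖g y‖ ^ 2 = δ * ∫ y in (-1:ℝ)..1, ‖W y‖ ^ 2 := by
      rw [← intervalIntegral.integral_const_mul]
      apply intervalIntegral.integral_congr
      intro y hy
      rw [Set.uIcc_of_le (by norm_num)] at hy
      simp only
      rw [hgn y hy]
      unfold rd
      have := (hden y).ne'
      field_simp
    have u2 : ∫ y in (-1:ℝ)..1, rq a δ y * ‖g y‖ ^ 2
        = ∫ y in (-1:ℝ)..1, (1 - y ^ 2 - lam) * ‖W y‖ ^ 2 := by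
      apply intervalIntegral.integral_congr
      intro y hy
      rw [Set.uIcc_of_le (by norm_num)] at hy
      simp only
      rw [hgn y hy, show 1 - y ^ 2 - lam = a ^ 2 - y ^ 2 by linarith]
      unfold rq
      have := (hden y).ne'
      field_simp
    have H2 := Real.sq_sqrt (rE_nonneg k g)
    have H0 := Real.sqrt_nonneg (rE k g)
    set h := √(rE k g) with hh
    have hhe : 2 * e ≤ h + F := by
      have : (2 * e - F) ^ 2 ≤ h ^ 2 := by
        rw [H2, hg2, ← F2, ← E2]; linarith
      have := abs_le_of_sq_le_sq this H0
      linarith [(abs_le.1 this).2]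
    have hFe : 2 * (F * e) ≤ F * h + F ^ 2 := by nlinarith
    have hFh : 0 ≤ F * h := by positivity
    have hFe0 : 0 ≤ F * e := by positivity
    obtain ⟨Γ, Γ0, G1, G2⟩ := rr_main (g := g) (f := f) (Φ := Φ) (W := W) (k := k) (a := a)
      (δ := δ) (M := 10 ^ 14) (B := F ^ 2 + F * h) hgc hf hΦ (by simp [hg, h1, hf1])
      (by simp [hg, h2, hf2]) (fun y => rfl) hk ha0 hδ (by norm_num) (by rw [haa]; exact hc.le)
      hWg hO (by rw [F2]; linarith) (by rw [u1, e2]; linarith [him.1, sq_nonneg F]) (by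
        rw [u2, hg2]
        linarith [him.1, hre.1, hre.2])
    rw [← H2] at G1 G2
    rw [Real.sqrt_sq H0] at G2
    exact rr_alg H0 F0 Γ0 hhe G1 G2

set_option maxHeartbeats 1000000 in
theorem rr_final {k lam δ : ℝ} {f W Φ : ℝ → ℂ} (hf : ContDiff ℝ 1 f) (hf1 : f 1 = 0)
    (hf2 : f (-1) = 0) (hW : ContDiff ℝ 1 W) (hΦ : ContDiff ℝ 2 Φ) (hk : 1 ≤ k) (hδ : 0 < δ)
    (hQ : ∀ y ∈ Set.Icc (-1:ℝ) 1,
          ((1 : ℂ) - (y : ℂ) ^ 2 - (lam : ℂ) + Complex.I * (δ : ℂ)) * W y + 2 * Φ y = f y)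
    (hO : ∀ y ∈ Set.Icc (-1:ℝ) 1, deriv (deriv Φ) y - (k : ℂ) ^ 2 * Φ y = W y)
    (h1 : Φ 1 = 0) (h2 : Φ (-1) = 0) :
    √(rE k Φ) + √δ * √(∫ y in (-1:ℝ)..1, ‖W y‖ ^ 2)
      + δ ^ ((3:ℝ)/2) * (|1 - lam| + δ) ^ (-(1:ℝ)/2) * √(∫ y in (-1:ℝ)..1, ‖deriv W y‖ ^ 2)
      ≤ 8 * 10 ^ 14 * √(rE k f) := by
  have hc := rr_core hf hf1 hf2 hW hΦ hk hδ hQ hO h1 h2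
  obtain ⟨e1, e2⟩ := rr_energy hf hf1 hf2 hW hΦ hQ hO h1 h2
  have cW := hW.continuous
  have cWd : Continuous (deriv W) := hW.continuous_deriv le_rfl
  have cfd : Continuous (deriv f) := hf.continuous_deriv le_rfl
  have hΦ1 : ContDiff ℝ 1 Φ := hΦ.of_le (by norm_num)
  have cPd : Continuous (deriv Φ) := hΦ1.continuous_deriv le_rfl
  have hJ := rJ_le (k := k) hf hΦ1
  have F2 := Real.sq_sqrt (rE_nonneg k f)
  have E2 := Real.sq_sqrt (rE_nonneg k Φ)
  have F0 := Real.sqrt_nonneg (rE k f)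
  have E0 := Real.sqrt_nonneg (rE k Φ)
  have nn : ∀ u : ℝ → ℂ, 0 ≤ ∫ t in (-1:ℝ)..1, ‖u t‖ ^ 2 := fun u =>
    intervalIntegral.integral_nonneg (by norm_num) (fun t _ => sq_nonneg _)
  have dP : ∫ y in (-1:ℝ)..1, ‖deriv Φ y‖ ^ 2 ≤ rE k Φ := by
    have := mul_nonneg (sq_nonneg k) (nn Φ)
    unfold rE; linarith
  have dF : ∫ y in (-1:ℝ)..1, ‖deriv f y‖ ^ 2 ≤ rE k f := by
    have := mul_nonneg (sq_nonneg k) (nn f)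
    unfold rE; linarith
  set F := √(rE k f)
  set e := √(rE k Φ)
  have hJ' : ‖rJ k f Φ‖ ≤ F * e := by
    apply rr_sqle (norm_nonneg _) (by positivity)
    rw [mul_pow, F2, E2]; exact hJ
  have hre := abs_le.1 ((Complex.abs_re_le_norm (rJ k f Φ)).trans hJ')
  have him := abs_le.1 ((Complex.abs_im_le_norm (rJ k f Φ)).trans hJ')
  have hFe : F * e ≤ 10 ^ 14 * F ^ 2 := by nlinarith
  have hee : e ^ 2 ≤ (10 ^ 14) ^ 2 * F ^ 2 := by
    rw [← mul_pow]; exact pow_le_pow_left₀ E0 hc 2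
  set N := ∫ y in (-1:ℝ)..1, ‖W y‖ ^ 2 with hN
  have hN0 : 0 ≤ N := nn W
  set T := ∫ y in (-1:ℝ)..1, ‖deriv W y‖ ^ 2 with hT
  have hT0 : 0 ≤ T := nn _
  have hX : δ * N ≤ 10 ^ 14 * F ^ 2 := by rw [e2]; linarith [him.1]
  have b2 : √δ * √N ≤ 10 ^ 14 * F := by
    apply rr_sqle (by positivity) (by positivity)
    rw [mul_pow, Real.sq_sqrt hδ.le, Real.sq_sqrt hN0]
    nlinarith [sq_nonneg F]
  set r := |1 - lam| + δ with hr
  have hr0 : 0 < r := by positivity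
  -- weighted integral
  set Y := ∫ y in (-1:ℝ)..1, y ^ 2 * ‖W y‖ ^ 2 with hY
  have sY : (∫ y in (-1:ℝ)..1, (1 - y ^ 2 - lam) * ‖W y‖ ^ 2) = (1 - lam) * N - Y := by
    rw [hN, hY, ← intervalIntegral.integral_const_mul, ← intervalIntegral.integral_sub
      (Continuous.intervalIntegrable (by fun_prop) _ _)
      (Continuous.intervalIntegrable (by fun_prop) _ _)]
    congr 1; funext y; ring
  rw [sY] at e1
  have hYb : δ * Y ≤ r * (10 ^ 14 * F ^ 2) := by
    have a1 : (1 - lam) * (δ * N) ≤ |1 - lam| * (10 ^ 14 * F ^ 2) :=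
      (mul_le_mul_of_nonneg_right (le_abs_self _) (by positivity)).trans
        (mul_le_mul_of_nonneg_left hX (abs_nonneg _))
    have a2 : Y ≤ (1 - lam) * N + 10 ^ 14 * F ^ 2 := by
      have := rE_nonneg k Φ
      linarith [hre.2]
    have a3 := mul_le_mul_of_nonneg_left a2 hδ.le
    rw [hr, add_mul]
    linarith
  have hder : ∀ y ∈ Set.Ioo (-1:ℝ) 1,
      ((1 : ℂ) - (y : ℂ) ^ 2 - (lam : ℂ) + Complex.I * (δ : ℂ)) * deriv W y
        = 2 * (y : ℂ) * W y - 2 * deriv Φ y + deriv f y := by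
    intro y hy
    have d1 : HasDerivAt (fun y : ℝ => ((1 : ℂ) - (y : ℂ) ^ 2 - (lam : ℂ)
        + Complex.I * (δ : ℂ))) (-(2 * (y : ℂ))) y := by
      have := (((hasDerivAt_id y).ofReal_comp.pow 2).const_sub (1:ℂ)).sub_const (lam:ℂ)
      have := this.add_const (Complex.I * (δ : ℂ))
      refine this.congr_deriv ?_
      simp
    have d2 := ((hW.differentiable (by norm_num)) y).hasDerivAt
    have d3 := ((hΦ.differentiable (by norm_num)) y).hasDerivAt
    have d4 := ((hf.differentiable (by norm_num)) y).hasDerivAt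
    have d5 := (d1.mul d2).add (d3.const_mul (2:ℂ))
    have d6 := d4.congr_of_eventuallyEq (f₁ := fun y : ℝ =>
      ((1 : ℂ) - (y : ℂ) ^ 2 - (lam : ℂ) + Complex.I * (δ : ℂ)) * W y + 2 * Φ y) (by
      filter_upwards [isOpen_Ioo.mem_nhds hy] with z hz
      exact hQ z (Set.Ioo_subset_Icc_self hz))
    have := d5.unique d6
    linear_combination this
  have hpt : ∀ y ∈ Set.Ioo (-1:ℝ) 1, δ ^ 2 * ‖deriv W y‖ ^ 2 ≤
      12 * (y ^ 2 * ‖W y‖ ^ 2) + (12 * ‖deriv Φ y‖ ^ 2 + 3 * ‖deriv f y‖ ^ 2) := by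
    intro y hy
    have a1 : δ * ‖deriv W y‖ ≤ 2 * |y| * ‖W y‖ + 2 * ‖deriv Φ y‖ + ‖deriv f y‖ := by
      have b1 : δ ≤ ‖((1 : ℂ) - (y : ℂ) ^ 2 - (lam : ℂ) + Complex.I * (δ : ℂ))‖ := by
        have := Complex.abs_im_le_norm ((1 : ℂ) - (y : ℂ) ^ 2 - (lam : ℂ) + Complex.I * (δ : ℂ))
        have e : ((1 : ℂ) - (y : ℂ) ^ 2 - (lam : ℂ) + Complex.I * (δ : ℂ)).im = δ := by
          have : ((y : ℂ) ^ 2).im = 0 := by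
            rw [← Complex.ofReal_pow]; exact Complex.ofReal_im _
          simp [this]
        rw [e] at this
        exact (le_abs_self _).trans this
      calc δ * ‖deriv W y‖ ≤ _ := mul_le_mul_of_nonneg_right b1 (norm_nonneg _)
        _ = ‖2 * (y : ℂ) * W y - 2 * deriv Φ y + deriv f y‖ := by rw [← norm_mul, hder y hy]
        _ ≤ ‖2 * (y : ℂ) * W y‖ + ‖2 * deriv Φ y‖ + ‖deriv f y‖ :=
          (norm_add_le _ _).trans (by gcongr; exact norm_sub_le _ _)
        _ = _ := by simp
    have a2 := pow_le_pow_left₀ (by positivity) a1 2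
    rw [mul_pow] at a2
    refine a2.trans ?_
    rw [← sq_abs y]
    nlinarith [sq_nonneg (2 * |y| * ‖W y‖ - 2 * ‖deriv Φ y‖),
      sq_nonneg (2 * |y| * ‖W y‖ - ‖deriv f y‖), sq_nonneg (2 * ‖deriv Φ y‖ - ‖deriv f y‖)]
  have hTb : δ ^ 2 * T ≤ 12 * Y + (12 * e ^ 2 + 3 * F ^ 2) := by
    have : δ ^ 2 * T ≤ 12 * Y + (12 * (∫ y in (-1:ℝ)..1, ‖deriv Φ y‖ ^ 2)
        + 3 * ∫ y in (-1:ℝ)..1, ‖deriv f y‖ ^ 2) := by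
      have i1 : IntervalIntegrable (fun y => 12 * (y ^ 2 * ‖W y‖ ^ 2)) volume (-1) 1 :=
        Continuous.intervalIntegrable (by fun_prop) _ _
      have i2 : IntervalIntegrable (fun y => 12 * ‖deriv Φ y‖ ^ 2) volume (-1) 1 :=
        Continuous.intervalIntegrable (by fun_prop) _ _
      have i3 : IntervalIntegrable (fun y => 3 * ‖deriv f y‖ ^ 2) volume (-1) 1 :=
        Continuous.intervalIntegrable (by fun_prop) _ _
      rw [hT, hY, ← intervalIntegral.integral_const_mul, ← intervalIntegral.integral_const_mul,
        ← intervalIntegral.integral_const_mul, ← intervalIntegral.integral_const_mul,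
        ← intervalIntegral.integral_add i2 i3, ← intervalIntegral.integral_add i1 (i2.add i3)]
      apply intervalIntegral.integral_mono_on_of_le_Ioo (by norm_num)
        (Continuous.intervalIntegrable (by fun_prop) _ _) (i1.add (i2.add i3))
      exact hpt
    rw [E2, F2]
    linarith
  have b3 : δ ^ ((3:ℝ)/2) * r ^ (-(1:ℝ)/2) * √T ≤ 6 * 10 ^ 14 * F := by
    apply rr_sqle (by positivity) (by positivity)
    rw [mul_pow, mul_pow, Real.sq_sqrt hT0, ← Real.rpow_natCast, ← Real.rpow_natCast,
      ← Real.rpow_mul hδ.le, ← Real.rpow_mul hr0.le]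
    have q1 : δ ^ ((3:ℝ) / 2 * ((2:ℕ):ℝ)) = δ ^ 3 := by
      rw [← Real.rpow_natCast]; norm_num
    have q2 : r ^ (-(1:ℝ) / 2 * ((2:ℕ):ℝ)) = r⁻¹ := by
      rw [← Real.rpow_neg_one]; norm_num
    rw [q1, q2]
    have q3 : δ ^ 3 * T ≤ (6 * 10 ^ 14 * F) ^ 2 * r := by
      have q4 := mul_le_mul_of_nonneg_left hTb hδ.le
      have q5 : δ ≤ r := by rw [hr]; linarith [abs_nonneg (1 - lam)]
      have q6 : δ * (12 * e ^ 2 + 3 * F ^ 2) ≤ r * (12 * ((10 ^ 14) ^ 2 * F ^ 2) + 3 * F ^ 2) := by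
        gcongr
      have q7 : 0 ≤ r * F ^ 2 := by positivity
      have q8 : δ ^ 3 * T = δ * (δ ^ 2 * T) := by ring
      rw [q8]
      linarith
    calc δ ^ 3 * r⁻¹ * T = δ ^ 3 * T / r := by field_simp
      _ ≤ _ := by rw [div_le_iff₀ hr0]; exact q3
  linarith

/-- **Resolvent estimate for the Rayleigh equation of the Poiseuille flow**
(Lemma 2.4):  for the problem `(1-y²-λ+iδ)W + 2Φ = f`, `(∂_y²-|k|²)Φ = W`,
`Φ(±1) = 0` with `f(±1) = 0` and `0 < δ ≤ δ₀`:
`‖(∂_y,|k|)Φ‖ + δ^{1/2}‖W‖ + δ^{3/2}(|1-λ|+δ)^{-1/2}‖W'‖ ≤ C‖(∂_y,|k|)f‖`. -/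
theorem rayleigh_resolvent :
    ∃ δ₀ C : ℝ, 0 < δ₀ ∧ δ₀ < 1 ∧ 0 < C ∧
      ∀ (lam δ : ℝ) (k₁ k₃ : ℤ) (f W Φ : ℝ → ℂ),
        0 < δ → δ ≤ δ₀ → 1 ≤ kabs k₁ k₃ →
        ContDiff ℝ 1 f → f (-1) = 0 → f 1 = 0 →
        ContDiff ℝ 1 W → ContDiff ℝ 2 Φ →
        (∀ y ∈ Set.Icc (-1:ℝ) 1,
          ((1 : ℂ) - (y : ℂ) ^ 2 - (lam : ℂ) + Complex.I * (δ : ℂ)) * W y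
            + 2 * Φ y = f y) →
        (∀ y ∈ Set.Icc (-1:ℝ) 1,
          deriv (deriv Φ) y - ((kabs k₁ k₃ : ℝ) : ℂ) ^ 2 * Φ y = W y) →
        Φ (-1) = 0 → Φ 1 = 0 →
        hk k₁ k₃ Φ + Real.sqrt δ * l2 W
          + δ ^ ((3:ℝ)/2) * (|1 - lam| + δ) ^ (-(1:ℝ)/2) * l2 (deriv W)
          ≤ C * hk k₁ k₃ f := by
  refine ⟨1 / 2, 8 * 10 ^ 14, by norm_num, by norm_num, by norm_num, ?_⟩
  intro lam δ k₁ k₃ f W Φ hδ _ hk1 hf hf2 hf1 hW hΦ hQ hO h2 h1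
  exact rr_final hf hf1 hf2 hW hΦ hk1 hδ hQ hO h1 h2

end
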